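/- arXiv:2409.03335 — 3 statements merged into one kernel-verified Lean document; each statement's English description precedes it below -/
import Mathlib

section
/- Fix δ ∈ (0,1). Suppose the number of labeled samples satisfies L < 2(1−δ)·k·log(p−k+1)/λ. Then for any estimator Ŝ of the support, based on the L labeled samples D_L, the worst-case error probability satisfies max over k-element supports S of P(Ŝ ≠ S) > δ − log 2 / log(p−k+1). -/
open MeasureTheory ProbabilityTheory Filter
open scoped ENNReal NNReal

noncomputable section

/-- Product of independent one-dimensional Gaussians `N(m j, 1)`: the law of `N(m, I_p)`. -/
def gaussPi {p : ℕ} (m : Fin p → ℝ) : Measure (Fin p → ℝ) :=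
  Measure.pi fun j => gaussianReal (m j) 1

/-- The law of a labeled sample `(x, y)` from the symmetric sparse Gaussian mixture model:
`y` uniform on `{-1, 1}` and `x | y ~ N(y μ, I_p)`. -/
def labeledLaw {p : ℕ} (m : Fin p → ℝ) : Measure ((Fin p → ℝ) × ℝ) :=
  (2 : ℝ≥0∞)⁻¹ • (gaussPi m).map (fun x => (x, (1 : ℝ)))
    + (2 : ℝ≥0∞)⁻¹ • (gaussPi (fun j => -m j)).map (fun x => (x, (-1 : ℝ)))

/-- The `k`-sparse mean vector with support `S` and nonzero entries `√(λ/k)`. -/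
def muVec (p k : ℕ) (lam : ℝ) (S : Finset (Fin p)) : Fin p → ℝ :=
  fun j => if j ∈ S then Real.sqrt (lam / k) else 0

/-- `Q` has density `exp (-l)` with respect to `P` and `E_P l = K` (so `KL(P,Q) = K`). -/
def HasKL {α : Type*} [MeasurableSpace α] (P Q : Measure α) (K : ℝ) : Prop :=
  ∃ l : α → ℝ, Measurable l ∧ Integrable l P ∧ ∫ x, l x ∂P = K ∧
    Q = P.withDensity (fun x => ENNReal.ofReal (Real.exp (-l x)))

lemma hasKL_gauss (a b : ℝ) :
    HasKL (gaussianReal a 1) (gaussianReal b 1) ((a - b) ^ 2 / 2) := by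
  have hi : Integrable (fun x : ℝ => x) (gaussianReal a 1) :=
    memLp_one_iff_integrable.1 (memLp_id_gaussianReal 1)
  refine ⟨fun x => (a - b) * x - (a ^ 2 - b ^ 2) / 2, by fun_prop, ?_, ?_, ?_⟩
  · exact (hi.const_mul _).sub (integrable_const _)
  · rw [integral_sub (hi.const_mul _) (integrable_const _), integral_const_mul,
      integral_id_gaussianReal]
    simp
    ring
  · rw [gaussianReal_of_var_ne_zero _ one_ne_zero, gaussianReal_of_var_ne_zero _ one_ne_zero,
      ← withDensity_mul _ (measurable_gaussianPDF _ _) (by fun_prop)]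
    congr 1
    ext x
    simp only [gaussianPDF, Pi.mul_apply, gaussianPDFReal]
    rw [← ENNReal.ofReal_mul (by positivity), mul_assoc (√_)⁻¹, ← Real.exp_add]
    congr 3
    simp
    ring

lemma hasKL_pi {n : ℕ} {α : Type*} [MeasurableSpace α] (P Q : Fin n → Measure α) (K : Fin n → ℝ)
    [∀ i, IsProbabilityMeasure (P i)] [∀ i, IsProbabilityMeasure (Q i)]
    (h : ∀ i, HasKL (P i) (Q i) (K i)) :
    HasKL (Measure.pi P) (Measure.pi Q) (∑ i, K i) := by
  choose l hl hli hlk hq using h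
  refine ⟨fun x => ∑ i, l i (x i), by fun_prop, ?_, ?_, ?_⟩
  · exact integrable_finsetSum _ fun i _ => integrable_comp_eval (hli i)
  · rw [integral_finsetSum _ fun i _ => integrable_comp_eval (hli i)]
    refine Finset.sum_congr rfl fun i _ => ?_
    rw [integral_comp_eval (hli i).aestronglyMeasurable, hlk]
  · refine Measure.pi_eq fun s hs => ?_
    have hm : ∀ i, Measurable ((s i).indicator
        (fun x => ENNReal.ofReal (Real.exp (-l i x)))) := fun i =>
      Measurable.indicator (by have := hl i; fun_prop) (hs i)
    rw [withDensity_apply _ (MeasurableSet.univ_pi hs),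
      ← lintegral_indicator (MeasurableSet.univ_pi hs)]
    have e : ∀ x : Fin n → α, (Set.univ.pi s).indicator
        (fun x => ENNReal.ofReal (Real.exp (-∑ i, l i (x i)))) x
        = ∏ i, (s i).indicator (fun x => ENNReal.ofReal (Real.exp (-l i x))) (x i) := by
      intro x
      by_cases hx : x ∈ Set.univ.pi s
      · rw [Set.indicator_of_mem hx, ← Finset.sum_neg_distrib, Real.exp_sum,
          ENNReal.ofReal_prod_of_nonneg (fun i _ => (Real.exp_pos _).le)]
        refine Finset.prod_congr rfl fun i _ => ?_
        rw [Set.indicator_of_mem (hx i trivial)]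
      · rw [Set.indicator_of_notMem hx]
        simp only [Set.mem_pi, not_forall] at hx
        obtain ⟨i, _, hi⟩ := hx
        exact (Finset.prod_eq_zero (Finset.mem_univ i) (Set.indicator_of_notMem hi _)).symm
    simp_rw [e]
    rw [lintegral_prod_eq_prod_lintegral_of_indepFun Finset.univ
      (fun i (x : Fin n → α) => (s i).indicator
        (fun x => ENNReal.ofReal (Real.exp (-l i x))) (x i))
      (iIndepFun_pi fun i => (hm i).aemeasurable) (fun i => (hm i).comp (measurable_pi_apply i))]
    refine Finset.prod_congr rfl fun i _ => ?_
    rw [(measurePreserving_eval P i).lintegral_comp (hm i), lintegral_indicator (hs i),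
      hq i, withDensity_apply _ (hs i)]

lemma withDensity_map_aux {α β : Type*} [MeasurableSpace α] [MeasurableSpace β] (P : Measure α)
    (f : α → β) (hf : Measurable f) (g : β → ℝ≥0∞) (hg : Measurable g) :
    (P.map f).withDensity g = (P.withDensity (fun x => g (f x))).map f := by
  ext s hs
  rw [withDensity_apply _ hs, Measure.map_apply hf hs, withDensity_apply _ (hf hs),
    setLIntegral_map hs hg hf]

instance {p : ℕ} (m : Fin p → ℝ) : IsProbabilityMeasure (gaussPi m) := by
  unfold gaussPi; infer_instance

instance {p : ℕ} (m : Fin p → ℝ) : IsProbabilityMeasure (labeledLaw m) := by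
  constructor
  have h1 : Measurable (fun x : Fin p → ℝ => (x, (1 : ℝ))) := by fun_prop
  have h2 : Measurable (fun x : Fin p → ℝ => (x, (-1 : ℝ))) := by fun_prop
  simp only [labeledLaw, Measure.add_apply, Measure.smul_apply,
    Measure.map_apply h1 MeasurableSet.univ, Measure.map_apply h2 MeasurableSet.univ,
    Set.preimage_univ, measure_univ, smul_eq_mul, mul_one]
  exact ENNReal.inv_two_add_inv_two

lemma hasKL_labeled {p : ℕ} (m m' : Fin p → ℝ) :
    HasKL (labeledLaw m) (labeledLaw m') (∑ j, (m j - m' j) ^ 2 / 2) := by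
  have H : ∀ m m' : Fin p → ℝ, HasKL (gaussPi m) (gaussPi m') (∑ j, (m j - m' j) ^ 2 / 2) :=
    fun m m' => hasKL_pi _ _ _ fun j => hasKL_gauss _ _
  have h1 : Measurable (fun x : Fin p → ℝ => (x, (1 : ℝ))) := by fun_prop
  have h2 : Measurable (fun x : Fin p → ℝ => (x, (-1 : ℝ))) := by fun_prop
  obtain ⟨l, hl, hli, hlk, hq⟩ := H m m'
  obtain ⟨r, hr, hri, hrk, hq'⟩ := H (fun j => -m j) (fun j => -m' j)
  have hc : Measurable (fun z : (Fin p → ℝ) × ℝ => if z.2 = 1 then l z.1 else r z.1) :=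
    Measurable.ite (measurable_snd (measurableSet_singleton 1)) (hl.comp measurable_fst)
      (hr.comp measurable_fst)
  have i1 : Integrable (fun z : (Fin p → ℝ) × ℝ => if z.2 = 1 then l z.1 else r z.1)
      ((gaussPi m).map (fun x => (x, (1 : ℝ)))) := by
    rw [integrable_map_measure hc.aestronglyMeasurable h1.aemeasurable]
    simpa [Function.comp_def] using hli
  have i2 : Integrable (fun z : (Fin p → ℝ) × ℝ => if z.2 = 1 then l z.1 else r z.1)
      ((gaussPi (fun j => -m j)).map (fun x => (x, (-1 : ℝ)))) := by
    rw [integrable_map_measure hc.aestronglyMeasurable h2.aemeasurable]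
    have : (-1 : ℝ) ≠ 1 := by norm_num
    simpa [Function.comp_def, this] using hri
  have i1' := i1.smul_measure (c := (2 : ℝ≥0∞)⁻¹) (by simp)
  have i2' := i2.smul_measure (c := (2 : ℝ≥0∞)⁻¹) (by simp)
  have hne : (-1 : ℝ) ≠ 1 := by norm_num
  refine ⟨_, hc, i1'.add_measure i2', ?_, ?_⟩
  · rw [labeledLaw, integral_add_measure i1' i2', integral_smul_measure, integral_smul_measure,
      integral_map h1.aemeasurable hc.aestronglyMeasurable,
      integral_map h2.aemeasurable hc.aestronglyMeasurable]
    simp only [if_true, hne, if_false, hlk, hrk]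
    have : ∀ j, (-m j - -m' j) ^ 2 / 2 = (m j - m' j) ^ 2 / 2 := fun j => by ring
    simp only [this]
    simp
    ring
  · have hd : Measurable (fun z : (Fin p → ℝ) × ℝ =>
        ENNReal.ofReal (Real.exp (-(if z.2 = 1 then l z.1 else r z.1)))) := by fun_prop
    rw [labeledLaw, labeledLaw, withDensity_add_measure, withDensity_smul_measure,
      withDensity_smul_measure, withDensity_map_aux _ _ h1 _ hd, withDensity_map_aux _ _ h2 _ hd,
      hq, hq']
    simp only [if_true, hne, if_false]

lemma hasKL_dv {α : Type*} [MeasurableSpace α] {P Q : Measure α} {K : ℝ}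
    [IsProbabilityMeasure P] [IsProbabilityMeasure Q] (h : HasKL P Q K) (B : Set α)
    (hB : MeasurableSet B) (t : ℝ) (ht : 0 ≤ t) :
    t * P.real B ≤ K + Real.log (1 + Q.real B * (Real.exp t - 1)) := by
  obtain ⟨l, hl, hli, hlk, hq⟩ := h
  have he : Measurable (fun x => Real.exp (-l x)) := by fun_prop
  have hfin : ∀ s, MeasurableSet s → ∫ x in s, Real.exp (-l x) ∂P = Q.real s := by
    intro s hs
    rw [integral_eq_lintegral_of_nonneg_ae (ae_of_all _ fun x => (Real.exp_pos _).le)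
      he.aestronglyMeasurable, Measure.real, hq, withDensity_apply _ hs]
  have hint : Integrable (fun x => Real.exp (-l x)) P := by
    refine ⟨he.aestronglyMeasurable, ?_⟩
    rw [hasFiniteIntegral_iff_ofReal (ae_of_all _ fun x => (Real.exp_pos _).le)]
    have := measure_univ (μ := Q)
    rw [hq, withDensity_apply _ MeasurableSet.univ, Measure.restrict_univ] at this
    rw [this]; exact ENNReal.one_lt_top
  have h1 : ∫ x, Real.exp (-l x) ∂P = 1 := by
    have := hfin Set.univ MeasurableSet.univ
    simpa using this
  set Z := 1 + Q.real B * (Real.exp t - 1) with hZ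
  have hZ0 : 0 < Z := by
    have : 0 ≤ Q.real B * (Real.exp t - 1) :=
      mul_nonneg measureReal_nonneg (by linarith [Real.one_le_exp ht])
    linarith
  have hle : ∀ x, B.indicator (fun _ => t) x - l x - Real.log Z ≤
      Z⁻¹ * (Real.exp (-l x) + (Real.exp t - 1) * B.indicator (fun x => Real.exp (-l x)) x) - 1 := by
    intro x
    have := Real.add_one_le_exp (B.indicator (fun _ => t) x - l x - Real.log Z)
    rw [Real.exp_sub, Real.exp_log hZ0] at this
    have e : Real.exp (B.indicator (fun _ => t) x - l x)
        = Real.exp (-l x) + (Real.exp t - 1) * B.indicator (fun x => Real.exp (-l x)) x := by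
      by_cases hx : x ∈ B
      · simp only [Set.indicator_of_mem hx]
        rw [sub_eq_add_neg, Real.exp_add]; ring
      · simp [Set.indicator_of_notMem hx]
    rw [e, div_eq_inv_mul] at this
    linarith
  have ib : Integrable (B.indicator (fun _ => t)) P := (integrable_const t).indicator hB
  have ie : Integrable (fun x => (Real.exp t - 1) * B.indicator (fun x => Real.exp (-l x)) x) P :=
    (hint.indicator hB).const_mul _
  have il : Integrable (fun x => B.indicator (fun _ => t) x - l x - Real.log Z) P := (ib.sub hli).sub (integrable_const (Real.log Z))
  have ir0 : Integrable (fun x => Z⁻¹ * (Real.exp (-l x)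
      + (Real.exp t - 1) * B.indicator (fun x => Real.exp (-l x)) x)) P :=
    (hint.add ie).const_mul Z⁻¹
  have ir := ir0.sub (integrable_const (1 : ℝ))
  have key := integral_mono il ir hle
  have eL : ∫ x, (B.indicator (fun _ => t) x - l x - Real.log Z) ∂P
      = t * P.real B - K - Real.log Z := by
    rw [integral_sub (f := fun x => B.indicator (fun _ => t) x - l x) (ib.sub hli) (integrable_const _),
      integral_sub ib hli, hlk,
      integral_indicator hB]
    simp [mul_comm]
  have eR : ∫ x, (Z⁻¹ * (Real.exp (-l x)
      + (Real.exp t - 1) * B.indicator (fun x => Real.exp (-l x)) x) - 1) ∂P = 0 := by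
    rw [integral_sub ir0 (integrable_const _), integral_const_mul,
      integral_add hint ie, integral_const_mul, integral_indicator hB, hfin B hB, h1]
    simp only [integral_const, probReal_univ, smul_eq_mul, mul_one]
    rw [mul_comm (Real.exp t - 1), ← hZ, inv_mul_cancel₀ hZ0.ne', sub_self]
  have := eL.symm.le.trans (key.trans eR.le)
  linarith

/-- Theorem 1: if `L < 2(1-δ) k log(p-k+1) / λ` then for any support
estimator `Ŝ` based on the `L` labeled samples, the worst-case error probability over
`k`-element supports `S` exceeds `δ - log 2 / log (p - k + 1)`. -/
theorem stmt0 (δ : ℝ) (hδ : δ ∈ Set.Ioo (0 : ℝ) 1) (p k L : ℕ) (lam : ℝ)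
    (hlam : 0 < lam) (hk : 0 < k) (hkp : k < p)
    (hL : (L : ℝ) < 2 * (1 - δ) * (k : ℝ) / lam * Real.log ((p : ℝ) - (k : ℝ) + 1))
    (est : (Fin L → (Fin p → ℝ) × ℝ) → Finset (Fin p)) :
    ∃ S : Finset (Fin p), S.card = k ∧
      ((Measure.pi fun _ : Fin L => labeledLaw (muVec p k lam S))
          {d | est d ≠ S}).toReal
        > δ - Real.log 2 / Real.log ((p : ℝ) - (k : ℝ) + 1) := by
  obtain ⟨T, hT⟩ : ∃ T : Finset (Fin p), T.card = k - 1 := by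
    obtain ⟨T, -, hT⟩ := Finset.exists_subset_card_eq (s := (Finset.univ : Finset (Fin p)))
      (n := k - 1) (by simp; omega)
    exact ⟨T, hT⟩
  set M : ℝ := (p : ℝ) - (k : ℝ) + 1 with hM
  have hkp' : (k : ℝ) + 1 ≤ p := by exact_mod_cast hkp
  have hM2 : 2 ≤ M := by rw [hM]; linarith
  have hlogM : 0 < Real.log M := Real.log_pos (by linarith)
  have hcard : ((Tᶜ).card : ℝ) = M := by
    rw [Finset.card_compl, hT, Fintype.card_fin, Nat.cast_sub (by omega), Nat.cast_sub (by omega)]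
    push_cast; rw [hM]; ring
  set P : Finset (Fin p) → Measure (Fin L → (Fin p → ℝ) × ℝ) := fun S =>
    Measure.pi fun _ : Fin L => labeledLaw (muVec p k lam S) with hP
  have hPp : ∀ S, IsProbabilityMeasure (P S) := fun S => by rw [hP]; infer_instance
  let A : Fin p → Set (Fin L → (Fin p → ℝ) × ℝ) := fun j =>
    toMeasurable (P (insert j T)) {d | est d ≠ insert j T}
  let B : Fin p → Set (Fin L → (Fin p → ℝ) × ℝ) := fun j => (A j)ᶜ
  have hBm : ∀ j, MeasurableSet (B j) := fun j => (measurableSet_toMeasurable _ _).compl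
  have hBe : ∀ j, ∀ d ∈ B j, est d = insert j T := by
    intro j d hd
    by_contra hc
    exact hd (subset_toMeasurable _ _ hc)
  have hdis : Set.PairwiseDisjoint (↑(Tᶜ) : Set (Fin p)) B := by
    intro i hi j hj hij
    refine Set.disjoint_left.2 fun d h1 h2 => hij ?_
    have e := (hBe i d h1).symm.trans (hBe j d h2)
    have : i ∈ insert j T := e ▸ Finset.mem_insert_self i T
    rcases Finset.mem_insert.1 this with h | h
    · exact h
    · simp [h] at hi
  have hsum : ∑ j ∈ Tᶜ, (P T).real (B j) ≤ 1 := by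
    rw [← measureReal_biUnion_finset hdis (fun j _ => hBm j)]
    exact measureReal_le_one
  obtain ⟨j, hj, hqj⟩ : ∃ j ∈ Tᶜ, (P T).real (B j) ≤ M⁻¹ := by
    by_contra! hc
    have hne : (Tᶜ).Nonempty := by
      rw [← Finset.card_pos]
      have : (0 : ℝ) < (Tᶜ).card := by rw [hcard]; linarith
      exact_mod_cast this
    have := Finset.sum_lt_sum_of_nonempty hne hc
    rw [Finset.sum_const, nsmul_eq_mul, hcard, mul_inv_cancel₀ (by linarith)] at this
    linarith
  have hjT : j ∉ T := by simpa using hj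
  have hk0 : (0 : ℝ) < k := by exact_mod_cast hk
  have hKL : HasKL (P (insert j T)) (P T) (L * (lam / k / 2)) := by
    have h := hasKL_pi (fun _ : Fin L => labeledLaw (muVec p k lam (insert j T)))
      (fun _ : Fin L => labeledLaw (muVec p k lam T)) _ (fun _ => hasKL_labeled _ _)
    convert h using 1
    rw [Finset.sum_const, Finset.card_univ, Fintype.card_fin, nsmul_eq_mul]
    congr 1
    rw [Finset.sum_eq_single j]
    · simp [muVec, hjT]
      rw [div_pow, Real.sq_sqrt hlam.le, Real.sq_sqrt hk0.le]
    · intro i _ hij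
      simp [muVec, hij]
    · simp
  have hdv := hasKL_dv hKL (B j) (hBm j) (Real.log M) hlogM.le
  rw [Real.exp_log (by linarith)] at hdv
  have hlog2 : Real.log (1 + (P T).real (B j) * (M - 1)) ≤ Real.log 2 := by
    have h0 : 0 ≤ (P T).real (B j) * (M - 1) := mul_nonneg measureReal_nonneg (by linarith)
    refine Real.log_le_log (by linarith) ?_
    have : (P T).real (B j) * (M - 1) ≤ M⁻¹ * M :=
      mul_le_mul hqj (by linarith) (by linarith) (by positivity)
    rw [inv_mul_cancel₀ (by linarith)] at this
    linarith
  have hK : L * (lam / k / 2) < (1 - δ) * Real.log M := by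
    have := mul_lt_mul_of_pos_right hL (show 0 < lam / k / 2 by positivity)
    refine this.trans_eq ?_
    field_simp
  refine ⟨insert j T, ?_, ?_⟩
  · rw [Finset.card_insert_of_notMem hjT, hT]; omega
  · have e1 : (P (insert j T) {d | est d ≠ insert j T}).toReal = 1 - (P (insert j T)).real (B j) := by
      rw [← measure_toMeasurable, measureReal_compl (measurableSet_toMeasurable _ _), probReal_univ]
      simp [Measure.real]
    change (P (insert j T) {d | est d ≠ insert j T}).toReal > _
    rw [e1]
    have : (P (insert j T)).real (B j) < (1 - δ) + Real.log 2 / Real.log M := by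
      rw [← mul_lt_mul_iff_right₀ hlogM, mul_add, mul_div_cancel₀ _ hlogM.ne']
      linarith
    linarith
end
end

section
/- Fix δ ∈ (0,1). Consider an asymptotic regime where (n, p, k) → ∞ with k/p → 0 and where the number of unlabeled samples satisfies n < 2(1−δ)·(k/λ²)·log(p−k+1)·max{1, λ}. Then for any estimator Ŝ of the support based on the n unlabeled samples D_n, as p → ∞, the worst-case error probability satisfies max over k-element supports S of P(Ŝ ≠ S) ≥ δ. -/
open MeasureTheory ProbabilityTheory Filter
open scoped ENNReal NNReal

noncomputable section

/-- The law of one unlabeled sample `x` from the symmetric sparse Gaussian mixture model: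
an equal-weight mixture of `N(μ, I_p)` and `N(-μ, I_p)`. -/
def unlabeledLaw {p : ℕ} (m : Fin p → ℝ) : Measure (Fin p → ℝ) :=
  (2 : ℝ≥0∞)⁻¹ • gaussPi m + (2 : ℝ≥0∞)⁻¹ • gaussPi (fun j => -m j)

lemma aux_pi_withDensity {ι : Type*} [Fintype ι] {α : ι → Type*} [∀ i, MeasurableSpace (α i)]
    (ν : ∀ i, Measure (α i)) [∀ i, IsProbabilityMeasure (ν i)]
    (f : ∀ i, α i → ℝ≥0∞) (hf : ∀ i, Measurable (f i))
    [∀ i, SigmaFinite ((ν i).withDensity (f i))] :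
    Measure.pi (fun i => (ν i).withDensity (f i))
      = (Measure.pi ν).withDensity (fun x => ∏ i, f i (x i)) := by
  classical
  refine Measure.pi_eq fun s hs => ?_
  rw [withDensity_apply _ (MeasurableSet.univ_pi hs),
    ← lintegral_indicator (MeasurableSet.univ_pi hs)]
  have h1 : ∀ x : (∀ i, α i), (Set.univ.pi s).indicator (fun x => ∏ i, f i (x i)) x
      = ∏ i, (s i).indicator (f i) (x i) := by
    intro x
    by_cases hx : x ∈ Set.univ.pi s
    · rw [Set.indicator_of_mem hx]
      refine Finset.prod_congr rfl fun i _ => ?_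
      rw [Set.indicator_of_mem (hx i (Set.mem_univ i))]
    · rw [Set.indicator_of_notMem hx]
      simp only [Set.mem_pi, Set.mem_univ, true_imp_iff, not_forall] at hx
      obtain ⟨i, hi⟩ := hx
      exact (Finset.prod_eq_zero (Finset.mem_univ i) (Set.indicator_of_notMem hi _)).symm
  simp_rw [h1]
  have hm : ∀ i, Measurable ((s i).indicator (f i)) := fun i => (hf i).indicator (hs i)
  rw [lintegral_prod_eq_prod_lintegral_of_indepFun Finset.univ
    (fun i (x : ∀ i, α i) => (s i).indicator (f i) (x i))
    (iIndepFun_pi fun i => (hm i).aemeasurable)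
    (fun i => (hm i).comp (measurable_pi_apply i))]
  refine Finset.prod_congr rfl fun i _ => ?_
  rw [withDensity_apply _ (hs i), ← lintegral_indicator (hs i)]
  exact (measurePreserving_eval ν i).lintegral_comp (hm i)

lemma aux_fano {Ω : Type*} [MeasurableSpace Ω] (P Q : Measure Ω) [IsProbabilityMeasure P]
    [IsProbabilityMeasure Q] (l : Ω → ℝ) (hl : Measurable l) (hpos : ∀ x, 0 < l x)
    (hPQ : P = Q.withDensity (fun x => ENNReal.ofReal (l x)))
    (hint : Integrable (fun x => Real.log (l x)) P) (n : ℕ)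
    (D : Set (Fin n → Ω)) (hD : MeasurableSet D) (M : ℝ) (hM : 1 ≤ M)
    (hQ : (Measure.pi fun _ : Fin n => Q).real D ≤ 1 / M) :
    (Measure.pi fun _ : Fin n => P).real D * Real.log M
      ≤ n * (∫ x, Real.log (l x) ∂P) + Real.log 2 := by
  classical
  set Pn := Measure.pi fun _ : Fin n => P with hPn
  set Qn := Measure.pi fun _ : Fin n => Q with hQn
  set L : (Fin n → Ω) → ℝ := fun x => ∏ i, l (x i) with hL
  have hLm : Measurable L := by
    refine Finset.measurable_prod _ fun i _ => hl.comp (measurable_pi_apply i)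
  have hLpos : ∀ x, 0 < L x := fun x => Finset.prod_pos fun i _ => hpos _
  have hPnQn : Pn = Qn.withDensity (fun x => ENNReal.ofReal (L x)) := by
    have hs : ∀ i : Fin n, SigmaFinite (Q.withDensity (fun x => ENNReal.ofReal (l x))) := by
      intro i; rw [← hPQ]; infer_instance
    rw [hPn, hPQ, aux_pi_withDensity (fun _ : Fin n => Q) (fun _ x => ENNReal.ofReal (l x))
      (fun _ => hl.ennreal_ofReal)]
    congr 1
    ext x
    rw [hL, ENNReal.ofReal_prod_of_nonneg fun i _ => (hpos _).le]
  -- the function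
  set g : (Fin n → Ω) → ℝ := fun x => D.indicator (fun _ => M - 1) x + 1 with hg
  have hgQ : Integrable g Qn := ((integrable_const _).indicator hD).add (integrable_const _)
  have hgm : Measurable g := (measurable_const.indicator hD).add measurable_const
  have hgint : Integrable (fun x => g x / L x) Pn := by
    rw [hPnQn, integrable_withDensity_iff hLm.ennreal_ofReal (by simp)]
    refine hgQ.congr (ae_of_all _ fun x => ?_)
    simp only [ENNReal.toReal_ofReal (hLpos x).le]
    rw [div_mul_cancel₀ _ (hLpos x).ne']
  have hgval : ∫ x, g x / L x ∂Pn ≤ 2 := by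
    have : ∫ x, g x / L x ∂Pn = ∫ x, g x ∂Qn := by
      rw [hPnQn, integral_withDensity_eq_integral_toReal_smul hLm.ennreal_ofReal (by simp)]
      refine integral_congr_ae (ae_of_all _ fun x => ?_)
      simp only [ENNReal.toReal_ofReal (hLpos x).le, smul_eq_mul]
      rw [mul_div_cancel₀ _ (hLpos x).ne']
    rw [this, hg, integral_add ((integrable_const _).indicator hD) (integrable_const _),
      integral_indicator_const _ hD]
    simp only [integral_const, probReal_univ, smul_eq_mul]
    have : Qn.real D * (M - 1) ≤ 1 / M * (M - 1) :=
      mul_le_mul_of_nonneg_right hQ (by linarith)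
    have h2 : 1 / M * (M - 1) ≤ 1 := by
      rw [div_mul_eq_mul_div, one_mul, div_le_one (by linarith)]; linarith
    linarith
  have hlogL : ∀ x, Real.log (L x) = ∑ i, Real.log (l (x i)) := fun x =>
    Real.log_prod fun i _ => (hpos _).ne'
  have hmp : ∀ i : Fin n, MeasurePreserving (Function.eval i) Pn P := fun i =>
    measurePreserving_eval (fun _ : Fin n => P) i
  have hii : ∀ i : Fin n, Integrable (fun x : Fin n → Ω => Real.log (l (x i))) Pn := fun i =>
    (hmp i).integrable_comp_of_integrable hint
  have hlogint : Integrable (fun x => Real.log (L x)) Pn := by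
    simp_rw [hlogL]
    exact integrable_finsetSum _ fun i _ => hii i
  have hlogval : ∫ x, Real.log (L x) ∂Pn = n * ∫ x, Real.log (l x) ∂P := by
    simp_rw [hlogL]
    rw [integral_finsetSum _ fun i _ => hii i]
    have : ∀ i : Fin n, ∫ x, Real.log (l (x i)) ∂Pn = ∫ x, Real.log (l x) ∂P := by
      intro i
      have h := integral_map (μ := Pn) (φ := Function.eval i) (hmp i).aemeasurable
        (f := fun x => Real.log (l x)) (Real.measurable_log.comp hl).aestronglyMeasurable
      rw [(hmp i).map_eq] at h
      exact h.symm
    simp [this]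
  have hpt : ∀ x, D.indicator (fun _ => Real.log M) x
      ≤ Real.log (L x) + (1/2) * (g x / L x) + (Real.log 2 - 1) := by
    intro x
    have hgx : D.indicator (fun _ => Real.log M) x = Real.log (g x) := by
      by_cases hx : x ∈ D <;> simp [hg, hx]
    have hgp : 0 < g x := by
      by_cases hx : x ∈ D
      · simp [hg, hx]; linarith
      · simp [hg, hx]
    rw [hgx]
    have := Real.log_le_sub_one_of_pos (x := g x / L x / 2) (by have := hLpos x; positivity)
    rw [Real.log_div (by have := hLpos x; positivity) (by norm_num),
      Real.log_div hgp.ne' (hLpos x).ne'] at this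
    linarith
  have := integral_mono (μ := Pn) ((integrable_const _).indicator hD)
    ((hlogint.add (hgint.const_mul (1/2))).add (integrable_const _)) hpt
  rw [integral_indicator_const _ hD] at this
  have e2 : ∫ x, (Real.log (L x) + (1/2) * (g x / L x) + (Real.log 2 - 1)) ∂Pn
      = ∫ x, Real.log (L x) ∂Pn + (1/2) * ∫ x, g x / L x ∂Pn + (Real.log 2 - 1) := by
    have i1 : Integrable (fun x => Real.log (L x) + (1/2) * (g x / L x)) Pn :=
      hlogint.add (hgint.const_mul (1/2))
    rw [integral_add i1 (integrable_const _),
      integral_add hlogint (hgint.const_mul (1/2)), integral_const_mul]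
    simp
  simp only [Pi.add_apply] at this
  rw [e2, hlogval] at this
  simp only [smul_eq_mul] at this
  linarith
lemma aux_tanh_le {v : ℝ} (hv : 0 ≤ v) : Real.tanh v ≤ v := by
  have h1 : Real.sinh v ≤ v * Real.cosh v := by
    have := monotoneOn_of_deriv_nonneg (convex_Ici (0:ℝ))
      (f := fun v => v * Real.cosh v - Real.sinh v) (by fun_prop) (by fun_prop)
      (by
        intro x hx
        simp only [interior_Ici, Set.mem_Ioi] at hx
        have : HasDerivAt (fun v => v * Real.cosh v - Real.sinh v) (x * Real.sinh x) x := by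
          have h := ((hasDerivAt_id x).mul (Real.hasDerivAt_cosh x)).sub (Real.hasDerivAt_sinh x)
          convert! h using 1
          simp
        rw [this.deriv]
        have := Real.sinh_pos_iff.2 hx
        positivity)
      (Set.mem_Ici.2 le_rfl) (Set.mem_Ici.2 hv) hv
    simp at this
    linarith
  rw [Real.tanh_eq_sinh_div_cosh, div_le_iff₀ (Real.cosh_pos v)]
  exact h1

lemma aux_tanh_nonneg {v : ℝ} (hv : 0 ≤ v) : 0 ≤ Real.tanh v := by
  rw [Real.tanh_eq_sinh_div_cosh]
  exact div_nonneg (Real.sinh_nonneg_iff.2 hv) (Real.cosh_pos v).le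

lemma aux_tanh_add (u : ℝ) {v : ℝ} (hv : 0 ≤ v) :
    Real.tanh (u + v) ≤ Real.tanh u + v * (1 - Real.tanh u ^ 2) + 2 * v ^ 2 := by
  have h1 : Real.tanh (u + v)
      = (Real.tanh u + Real.tanh v) / (1 + Real.tanh u * Real.tanh v) := by
    simp only [Real.tanh_eq_sinh_div_cosh, Real.sinh_add, Real.cosh_add]
    have := (Real.cosh_pos u).ne'
    have := (Real.cosh_pos v).ne'
    field_simp
  have h2 := aux_tanh_le hv
  have h3 := aux_tanh_nonneg hv
  have h4 := Real.tanh_lt_one v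
  have h5 := Real.tanh_lt_one u
  have h6 := Real.neg_one_lt_tanh u
  rw [h1]
  set m := Real.tanh u
  set t := Real.tanh v
  have hpos : 0 < 1 + m * t := by nlinarith
  have h7 : (m + t) / (1 + m * t) ≤ m + t * (1 - m ^ 2) + 2 * t ^ 2 := by
    rw [div_le_iff₀ hpos]
    have : 0 ≤ t ^ 2 * (m * (1 - m ^ 2) + 2 * (1 + m * t)) := by
      apply mul_nonneg (sq_nonneg _)
      rcases le_or_gt 0 m with hm | hm
      · have : 0 ≤ 1 - m ^ 2 := by nlinarith
        have : 0 ≤ m * (1 - m^2) := by positivity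
        nlinarith [mul_nonneg hm h3]
      · have a1 : 1 + m * t ≥ 1 + m := by nlinarith
        have a2 : m * (1 - m^2) + 2 * (1 + m) = (1 + m) * (m * (1 - m) + 2) := by ring
        have : 0 ≤ (1 + m) * (m * (1 - m) + 2) := by
          apply mul_nonneg (by linarith); nlinarith
        linarith
    nlinarith
  have h8 : t ^ 2 ≤ v ^ 2 := by gcongr
  have h9 : t * (1 - m ^ 2) ≤ v * (1 - m ^ 2) := by
    apply mul_le_mul_of_nonneg_right h2; nlinarith
  linarith

lemma aux_hasDeriv_logcosh (x : ℝ) :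
    HasDerivAt (fun x => Real.log (Real.cosh x)) (Real.tanh x) x := by
  have := (Real.hasDerivAt_cosh x).log (Real.cosh_pos x).ne'
  rwa [Real.tanh_eq_sinh_div_cosh]

lemma aux_logcosh_pos (u : ℝ) {v : ℝ} (hv : 0 ≤ v) :
    Real.log (Real.cosh (u + v)) - Real.log (Real.cosh u) ≤
      v * Real.tanh u + v ^ 2 * (1 - Real.tanh u ^ 2) / 2 + 2 / 3 * v ^ 3 := by
  set m := Real.tanh u with hm
  have hd : ∀ x, HasDerivAt (fun v => v * m + v ^ 2 * (1 - m ^ 2) / 2 + 2 / 3 * v ^ 3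
      - Real.log (Real.cosh (u + v)))
      (m + x * (1 - m ^ 2) + 2 * x ^ 2 - Real.tanh (u + x)) x := by
    intro x
    have h1 := (aux_hasDeriv_logcosh (u + x)).comp_const_add u x
    have h2 := (((hasDerivAt_id x).mul_const m).add
      ((((hasDerivAt_id x).pow 2).mul_const (1 - m^2)).div_const 2)).add
      (((hasDerivAt_id x).pow 3).const_mul (2/3))
    convert! h2.sub h1 using 1
    simp; ring
  have := monotoneOn_of_deriv_nonneg (convex_Ici (0:ℝ))
      (f := fun v => v * m + v ^ 2 * (1 - m ^ 2) / 2 + 2 / 3 * v ^ 3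
      - Real.log (Real.cosh (u + v)))
      (fun x _ => (hd x).continuousAt.continuousWithinAt)
      (fun x _ => (hd x).differentiableAt.differentiableWithinAt)
      (by
        intro x hx
        simp only [interior_Ici, Set.mem_Ioi] at hx
        rw [(hd x).deriv]
        have := aux_tanh_add u hx.le
        linarith)
      (Set.mem_Ici.2 le_rfl) (Set.mem_Ici.2 hv) hv
  simp at this
  linarith

lemma aux_logcosh (u v : ℝ) :
    Real.log (Real.cosh (u + v)) - Real.log (Real.cosh u) ≤
      v * Real.tanh u + v ^ 2 * (1 - Real.tanh u ^ 2) / 2 + 2 / 3 * |v| ^ 3 := by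
  rcases le_total 0 v with hv | hv
  · rw [abs_of_nonneg hv]; exact aux_logcosh_pos u hv
  · have := aux_logcosh_pos (-u) (v := -v) (by linarith)
    rw [abs_of_nonpos hv]
    rw [← neg_add, Real.cosh_neg, Real.cosh_neg, Real.tanh_neg] at this
    convert this using 1
    ring

lemma aux_logcosh_abs (u v : ℝ) :
    |Real.log (Real.cosh (u + v)) - Real.log (Real.cosh u)| ≤ |v| := by
  have h := Convex.norm_image_sub_le_of_norm_hasDerivWithin_le
    (f := fun x => Real.log (Real.cosh x)) (f' := Real.tanh) (C := 1) (s := Set.univ)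
    (x := u) (y := u + v)
    (fun x _ => (aux_hasDeriv_logcosh x).hasDerivWithinAt)
    (fun x _ => by rw [Real.norm_eq_abs]; exact (Real.abs_tanh_lt_one x).le)
    convex_univ (Set.mem_univ _) (Set.mem_univ _)
  simpa using h
lemma aux_cont_tanh : Continuous Real.tanh := by
  have : Real.tanh = fun x => Real.sinh x / Real.cosh x := by
    ext x; exact Real.tanh_eq_sinh_div_cosh x
  rw [this]
  exact Real.continuous_sinh.div Real.continuous_cosh fun x => (Real.cosh_pos x).ne'

lemma aux_shift (v : ℝ≥0) (hv : v ≠ 0) (F : ℝ → ℝ) :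
    ∫ x, F x ∂(gaussianReal v v)
      = Real.exp (-(v:ℝ)/2) * ∫ x, F x * Real.exp x ∂(gaussianReal 0 v) := by
  rw [integral_gaussianReal_eq_integral_smul hv, integral_gaussianReal_eq_integral_smul hv,
    ← integral_const_mul]
  refine integral_congr_ae (ae_of_all _ fun x => ?_)
  simp only [smul_eq_mul, gaussianPDFReal_def]
  have hv' : (v:ℝ) ≠ 0 := by exact_mod_cast hv
  have : Real.exp (-(x - v)^2 / (2 * v))
      = Real.exp (-(v:ℝ)/2) * (Real.exp (-(x - 0)^2 / (2 * v)) * Real.exp x) := by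
    rw [← Real.exp_add, ← Real.exp_add]
    congr 1
    field_simp
    ring
  rw [this]; ring

lemma aux_sech_eq (x : ℝ) : (1 - Real.tanh x) * Real.exp x = 1 / Real.cosh x := by
  rw [Real.tanh_eq_sinh_div_cosh]
  have h := (Real.cosh_pos x).ne'
  have h2 : Real.cosh x - Real.sinh x = Real.exp (-x) := Real.cosh_sub_sinh x
  field_simp
  rw [h2, ← Real.exp_add]; simp

lemma aux_int_tanh (μ : Measure ℝ) [IsProbabilityMeasure μ] : Integrable Real.tanh μ := by
  refine Integrable.of_bound aux_cont_tanh.aestronglyMeasurable 1 (ae_of_all _ fun x => ?_)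
  exact (Real.abs_tanh_lt_one x).le

lemma aux_int_tanh2 (μ : Measure ℝ) [IsProbabilityMeasure μ] :
    Integrable (fun x => Real.tanh x ^ 2) μ := by
  refine Integrable.of_bound (aux_cont_tanh.pow 2).aestronglyMeasurable 1 (ae_of_all _ fun x => ?_)
  rw [norm_pow]
  exact pow_le_one₀ (norm_nonneg _) (Real.abs_tanh_lt_one x).le

lemma aux_nishi (v : ℝ≥0) (hv : v ≠ 0) :
    ∫ x, Real.tanh x ^ 2 ∂(gaussianReal v v) = ∫ x, Real.tanh x ∂(gaussianReal v v) := by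
  have h : ∫ x, (Real.tanh x - Real.tanh x ^ 2) ∂(gaussianReal v v) = 0 := by
    rw [aux_shift v hv]
    have h1 : ∀ x, (Real.tanh x - Real.tanh x ^ 2) * Real.exp x = Real.tanh x / Real.cosh x := by
      intro x
      have := aux_sech_eq x
      calc _ = Real.tanh x * ((1 - Real.tanh x) * Real.exp x) := by ring
        _ = _ := by rw [this]; ring
    simp_rw [h1]
    have hm : (gaussianReal 0 v).map (fun x => -x) = gaussianReal 0 v := by
      rw [gaussianReal_map_neg]; simp
    have h2 : ∫ x, Real.tanh x / Real.cosh x ∂(gaussianReal 0 v)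
        = - ∫ x, Real.tanh x / Real.cosh x ∂(gaussianReal 0 v) := by
      conv_lhs => rw [← hm]
      rw [integral_map (φ := fun x : ℝ => -x) (f := fun x => Real.tanh x / Real.cosh x)
        measurable_neg.aemeasurable
        (aux_cont_tanh.div Real.continuous_cosh fun x => (Real.cosh_pos x).ne').aestronglyMeasurable,
        ← integral_neg]
      refine integral_congr_ae (ae_of_all _ fun x => ?_)
      simp [Real.tanh_neg, Real.cosh_neg, neg_div]
    have : ∫ x, Real.tanh x / Real.cosh x ∂(gaussianReal 0 v) = 0 := by linarith
    rw [this, mul_zero]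
  rw [integral_sub (aux_int_tanh _) (aux_int_tanh2 _)] at h
  linarith

lemma aux_int_cosh (v : ℝ≥0) : Integrable Real.cosh (gaussianReal 0 v) ∧
    ∫ x, Real.cosh x ∂(gaussianReal 0 v) = Real.exp (v/2) := by
  have i1 : Integrable (fun x => Real.exp x) (gaussianReal 0 v) := by
    simpa using integrable_exp_mul_gaussianReal (μ := 0) (v := v) 1
  have i2 : Integrable (fun x => Real.exp (-x)) (gaussianReal 0 v) := by
    simpa using integrable_exp_mul_gaussianReal (μ := 0) (v := v) (-1)
  have e1 := congrFun (mgf_fun_id_gaussianReal (μ := 0) (v := v)) 1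
  have e2 := congrFun (mgf_fun_id_gaussianReal (μ := 0) (v := v)) (-1)
  simp [mgf] at e1 e2
  have hc : Real.cosh = fun x => (1/2) * (Real.exp x + Real.exp (-x)) := by
    ext x; rw [Real.cosh_eq]; ring
  rw [hc]
  refine ⟨(i1.add i2).const_mul _, ?_⟩
  rw [integral_const_mul, integral_add i1 i2, e1, e2]; ring

lemma aux_q_le (v : ℝ≥0) (hv : v ≠ 0) :
    ∫ x, Real.tanh x ∂(gaussianReal v v) ≤ v := by
  have h1 : ∫ x, (1 - Real.tanh x) ∂(gaussianReal v v)
      = Real.exp (-(v:ℝ)/2) * ∫ x, 1 / Real.cosh x ∂(gaussianReal 0 v) := by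
    rw [aux_shift v hv]; simp_rw [aux_sech_eq]
  rw [integral_sub (integrable_const _) (aux_int_tanh _)] at h1
  simp only [integral_const, probReal_univ, smul_eq_mul, mul_one] at h1
  set t := Real.exp (-(v:ℝ)/2) with ht
  obtain ⟨ic, ec⟩ := aux_int_cosh v
  have h2 : ∫ x, (2 * t - t ^ 2 * Real.cosh x) ∂(gaussianReal 0 v)
      ≤ ∫ x, 1 / Real.cosh x ∂(gaussianReal 0 v) := by
    refine integral_mono ((integrable_const _).sub (ic.const_mul _)) ?_ ?_
    · refine Integrable.of_bound (continuous_const.div Real.continuous_cosh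
        fun x => (Real.cosh_pos x).ne').aestronglyMeasurable 1 (ae_of_all _ fun x => ?_)
      rw [Real.norm_eq_abs, abs_of_nonneg (by have := Real.cosh_pos x; positivity),
        div_le_one (Real.cosh_pos x)]
      exact Real.one_le_cosh x
    · intro x
      have := Real.cosh_pos x
      simp only
      rw [le_div_iff₀ this]
      nlinarith [sq_nonneg (t * Real.cosh x - 1)]
  rw [integral_sub (integrable_const _) (ic.const_mul _), integral_const_mul (t ^ 2), ec] at h2
  simp only [integral_const, probReal_univ, smul_eq_mul, one_mul] at h2
  have h3 : t * Real.exp (v/2) = 1 := by rw [ht, ← Real.exp_add]; ring_nf; simp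
  have h4 : t ^ 2 * Real.exp (v/2) = t := by rw [pow_two, mul_assoc, h3, mul_one]
  rw [h4] at h2
  have h5 : t * t = Real.exp (-(v:ℝ)) := by rw [ht, ← Real.exp_add]; ring_nf
  have h6 : t * (2 * t - t) ≤ t * ∫ x, 1 / Real.cosh x ∂(gaussianReal 0 v) :=
    mul_le_mul_of_nonneg_left h2 (Real.exp_pos _).le
  have h7 := Real.add_one_le_exp (-(v:ℝ))
  have h8 : t * (2 * t - t) = t * t := by ring
  linarith

lemma aux_third (a : ℝ) (ha : 0 ≤ a) (ha1 : a ≤ 1) :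
    Integrable (fun x => |x| ^ 3) (gaussianReal a 1) ∧
    ∫ x, |x| ^ 3 ∂(gaussianReal a 1) ≤ 12 * Real.exp (3/2) := by
  have i1 : Integrable (fun x => Real.exp x) (gaussianReal a 1) := by
    simpa using integrable_exp_mul_gaussianReal (μ := a) (v := 1) 1
  have i2 : Integrable (fun x => Real.exp (-x)) (gaussianReal a 1) := by
    simpa using integrable_exp_mul_gaussianReal (μ := a) (v := 1) (-1)
  have e1 := congrFun (mgf_fun_id_gaussianReal (μ := a) (v := 1)) 1
  have e2 := congrFun (mgf_fun_id_gaussianReal (μ := a) (v := 1)) (-1)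
  simp [mgf] at e1 e2
  have hb : ∀ x : ℝ, |x| ^ 3 ≤ 6 * (Real.exp x + Real.exp (-x)) := by
    intro x
    have h1 := Real.pow_div_factorial_le_exp |x| (abs_nonneg x) 3
    have h2 : Real.exp |x| ≤ Real.exp x + Real.exp (-x) := by
      have := Real.exp_pos x
      have := Real.exp_pos (-x)
      rcases abs_cases x with ⟨h, _⟩ | ⟨h, _⟩ <;> rw [h] <;> linarith
    have : ((Nat.factorial 3 : ℕ) : ℝ) = 6 := by norm_num [Nat.factorial]
    rw [this] at h1
    linarith
  have ii := (i1.add i2).const_mul 6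
  have hi : Integrable (fun x => |x| ^ 3) (gaussianReal a 1) := by
    refine ii.mono (by fun_prop) (ae_of_all _ fun x => ?_)
    rw [Real.norm_eq_abs, Real.norm_eq_abs, abs_of_nonneg (by positivity)]
    exact (hb x).trans (le_abs_self _)
  refine ⟨hi, ?_⟩
  refine (integral_mono hi ii hb).trans ?_
  simp only [Pi.add_apply]
  rw [integral_const_mul, integral_add i1 i2, e1, e2]
  have h1 : Real.exp (a + 1/2) ≤ Real.exp (3/2) := Real.exp_le_exp.2 (by linarith)
  have h2 : Real.exp (-a + 1/2) ≤ Real.exp (3/2) := Real.exp_le_exp.2 (by linarith)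
  rw [one_div] at h1 h2
  linarith

lemma aux_moments (a : ℝ) : Integrable (fun x : ℝ => x) (gaussianReal a 1) ∧
    Integrable (fun x : ℝ => x ^ 2) (gaussianReal a 1) ∧
    ∫ x, x ^ 2 ∂(gaussianReal a 1) = 1 + a ^ 2 := by
  have m2 : MemLp (fun x : ℝ => x) 2 (gaussianReal a 1) := memLp_id_gaussianReal' 2 (by simp)
  refine ⟨m2.integrable (by norm_num), m2.integrable_sq, ?_⟩
  have h := variance_eq_sub (μ := gaussianReal a 1) m2
  rw [variance_fun_id_gaussianReal, integral_id_gaussianReal] at h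
  simp only [NNReal.coe_one, Pi.pow_apply] at h
  linarith

lemma aux_twoD (v : ℝ≥0) (hv : v ≠ 0) (a : ℝ) (ha : 0 ≤ a) (ha1 : a ≤ 1) :
    ∫ z : ℝ × ℝ, (-a^2/2 + (Real.log (Real.cosh (z.1 + a * z.2)) - Real.log (Real.cosh z.1)))
      ∂((gaussianReal v v).prod (gaussianReal a 1))
      ≤ a^2/2 * min 1 (v:ℝ) + (1/2 + 8 * Real.exp (3/2)) * a ^ 3 := by
  obtain ⟨j1, j2, e2⟩ := aux_moments a
  obtain ⟨j3, e3⟩ := aux_third a ha ha1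
  have e1 : ∫ x, x ∂(gaussianReal a 1) = a := integral_id_gaussianReal
  set ν := gaussianReal v v
  set η := gaussianReal a 1
  have k1 := aux_int_tanh ν
  have k2 : Integrable (fun x => 1 - Real.tanh x ^ 2) ν := (integrable_const _).sub (aux_int_tanh2 ν)
  have k0 : Integrable (fun _ : ℝ => (1:ℝ)) ν := integrable_const _
  have A1 : Integrable (fun z : ℝ × ℝ => a * (Real.tanh z.1 * z.2)) (ν.prod η) :=
    (k1.mul_prod j1).const_mul _
  have A2 : Integrable (fun z : ℝ × ℝ => a^2/2 * ((1 - Real.tanh z.1 ^ 2) * z.2^2)) (ν.prod η) :=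
    (k2.mul_prod j2).const_mul _
  have A3 : Integrable (fun z : ℝ × ℝ => 2/3 * a^3 * (1 * |z.2|^3)) (ν.prod η) :=
    (k0.mul_prod j3).const_mul _
  have A0 : Integrable (fun z : ℝ × ℝ => -a^2/2) (ν.prod η) := integrable_const _
  have A01 : Integrable (fun z : ℝ × ℝ => -a^2/2 + a * (Real.tanh z.1 * z.2)) (ν.prod η) := A0.add A1
  have A02 : Integrable (fun z : ℝ × ℝ => -a^2/2 + a * (Real.tanh z.1 * z.2)
    + a^2/2 * ((1 - Real.tanh z.1 ^ 2) * z.2^2)) (ν.prod η) := A01.add A2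
  have B0 : Integrable (fun z : ℝ × ℝ => a * (1 * z.2)) (ν.prod η) :=
    (k0.mul_prod j1).const_mul _
  have hc : Continuous fun z : ℝ × ℝ =>
      Real.log (Real.cosh (z.1 + a * z.2)) - Real.log (Real.cosh z.1) := by
    refine Continuous.sub ?_ ?_
    · refine Continuous.log (by fun_prop) fun z => (Real.cosh_pos _).ne'
    · refine Continuous.log (by fun_prop) fun z => (Real.cosh_pos _).ne'
  have hI : Integrable (fun z : ℝ × ℝ =>
      Real.log (Real.cosh (z.1 + a * z.2)) - Real.log (Real.cosh z.1)) (ν.prod η) := by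
    refine B0.mono hc.aestronglyMeasurable (ae_of_all _ fun z => ?_)
    rw [one_mul]
    exact aux_logcosh_abs _ _
  have hle := integral_mono (A0.add hI) (A02.add A3) (fun z => by
    have h := aux_logcosh z.1 (a * z.2)
    rw [abs_mul, abs_of_nonneg ha] at h
    simp only [Pi.add_apply]
    nlinarith [h])
  simp only [Pi.add_apply] at hle
  refine hle.trans ?_
  rw [integral_add A02 A3, integral_add A01 A2, integral_add A0 A1, integral_const_mul,
    integral_const_mul, integral_const_mul, integral_prod_mul Real.tanh (fun x : ℝ => x),
    integral_prod_mul (fun x => 1 - Real.tanh x ^ 2) (fun x : ℝ => x ^ 2),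
    integral_prod_mul (fun _ : ℝ => (1:ℝ)) (fun x : ℝ => |x|^3),
    integral_sub (integrable_const _) (aux_int_tanh2 ν), aux_nishi v hv, e1, e2]
  simp only [integral_const, probReal_univ, smul_eq_mul, one_mul]
  have q1 := aux_q_le v hv
  have q0 : 0 ≤ ∫ x, Real.tanh x ∂ν := by
    rw [← aux_nishi v hv]; exact integral_nonneg fun x => sq_nonneg _
  have q2 : ∫ x, Real.tanh x ∂ν ≤ 1 := by
    calc _ ≤ ∫ x, (1:ℝ) ∂ν := integral_mono k1 (integrable_const _) fun x => (Real.tanh_lt_one x).le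
      _ = 1 := by simp
  change ∫ x, Real.tanh x ∂ν ≤ v at q1
  set q := ∫ x, Real.tanh x ∂ν
  have q3 : q ≤ min 1 (v:ℝ) := le_min q2 q1
  have r1 : a^2/2 * q ≤ a^2/2 * min 1 (v:ℝ) := by gcongr
  have r2 : 2/3 * a^3 * ∫ x, |x|^3 ∂η ≤ 2/3 * a^3 * (12 * Real.exp (3/2)) := by gcongr
  have r3 : a^4 ≤ a^3 := pow_le_pow_of_le_one ha ha1 (by norm_num)
  have r4 : 0 ≤ a^4 * q := by positivity
  nlinarith
instance aux_inst_gaussPi {p : ℕ} (m : Fin p → ℝ) : IsProbabilityMeasure (gaussPi m) := by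
  unfold gaussPi; infer_instance

instance aux_inst_unl {p : ℕ} (m : Fin p → ℝ) : IsProbabilityMeasure (unlabeledLaw m) := by
  constructor
  simp [unlabeledLaw, ENNReal.inv_two_add_inv_two]

lemma aux_gauss1 (m : ℝ) : gaussianReal m 1
    = (gaussianReal 0 1).withDensity (fun x => ENNReal.ofReal (Real.exp (m * x - m^2/2))) := by
  rw [gaussianReal_of_var_ne_zero _ one_ne_zero, gaussianReal_of_var_ne_zero _ one_ne_zero,
    ← withDensity_mul _ (measurable_gaussianPDF _ _) (by fun_prop)]
  congr 1
  ext x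
  simp only [Pi.mul_apply, gaussianPDF]
  rw [← ENNReal.ofReal_mul (gaussianPDFReal_nonneg _ _ _)]
  congr 1
  simp only [gaussianPDFReal_def]
  rw [mul_assoc (_)⁻¹, ← Real.exp_add]
  congr 2
  simp only [NNReal.coe_one]
  ring

lemma aux_gaussPi_density {p : ℕ} (m : Fin p → ℝ) : gaussPi m
    = (gaussPi (fun _ => 0)).withDensity
      (fun x => ENNReal.ofReal (Real.exp (∑ i, m i * x i - (∑ i, m i ^ 2)/2))) := by
  have hs : ∀ i, SigmaFinite ((gaussianReal 0 1).withDensity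
      (fun x => ENNReal.ofReal (Real.exp (m i * x - m i^2/2)))) := by
    intro i; rw [← aux_gauss1]; infer_instance
  have h := aux_pi_withDensity (fun _ : Fin p => gaussianReal 0 1)
    (fun i x => ENNReal.ofReal (Real.exp (m i * x - m i^2/2))) (fun i => by fun_prop)
  unfold gaussPi
  simp_rw [aux_gauss1 (m _)]
  rw [h]
  congr 1
  ext x
  rw [← ENNReal.ofReal_prod_of_nonneg fun i _ => (Real.exp_pos _).le, ← Real.exp_sum,
    Finset.sum_sub_distrib, Finset.sum_div]

lemma aux_unl_density {p : ℕ} (m : Fin p → ℝ) : unlabeledLaw m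
    = (gaussPi (fun _ => 0)).withDensity
      (fun x => ENNReal.ofReal (Real.exp (-(∑ i, m i ^ 2)/2) * Real.cosh (∑ i, m i * x i))) := by
  unfold unlabeledLaw
  rw [aux_gaussPi_density m, aux_gaussPi_density (fun j => - m j),
    ← withDensity_smul _ (by fun_prop), ← withDensity_smul _ (by fun_prop),
    ← withDensity_add_left (by fun_prop)]
  congr 1
  ext x
  simp only [Pi.add_apply, Pi.smul_apply, smul_eq_mul]
  have h2 : (2 : ℝ≥0∞)⁻¹ = ENNReal.ofReal (1/2) := by
    rw [one_div, ENNReal.ofReal_inv_of_pos (by norm_num)]; simp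
  rw [h2, ← ENNReal.ofReal_mul (by norm_num), ← ENNReal.ofReal_mul (by norm_num),
    ← ENNReal.ofReal_add (by positivity) (by positivity)]
  congr 1
  rw [Real.cosh_eq]
  simp only [neg_mul, Finset.sum_neg_distrib, neg_sq, sub_eq_add_neg, Real.exp_add, neg_div]
  ring

lemma aux_law {p : ℕ} (m c : Fin p → ℝ) :
    (gaussPi m).map (fun x => ∑ i, c i * x i)
      = gaussianReal (∑ i, c i * m i) (∑ i, c i ^ 2).toNNReal := by
  have hmeas : Measurable (fun x : Fin p → ℝ => ∑ i, c i * x i) := by fun_prop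
  have : IsProbabilityMeasure ((gaussPi m).map (fun x => ∑ i, c i * x i)) :=
    Measure.isProbabilityMeasure_map hmeas.aemeasurable
  refine Measure.ext_of_charFun ?_
  ext t
  rw [charFun_gaussianReal, charFun_apply_real, integral_map hmeas.aemeasurable (by fun_prop)]
  have h1 : ∀ x : Fin p → ℝ, Complex.exp (t * ((∑ i, c i * x i : ℝ)) * Complex.I)
      = ∏ i, Complex.exp (((t * c i : ℝ)) * (x i) * Complex.I) := by
    intro x
    rw [← Complex.exp_sum]
    congr 1
    push_cast
    rw [Finset.mul_sum, Finset.sum_mul]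
    refine Finset.sum_congr rfl fun i _ => by ring
  simp_rw [h1]
  unfold gaussPi
  rw [integral_fintype_prod_eq_prod
    (fun i (y : ℝ) => Complex.exp (((t * c i : ℝ)) * y * Complex.I))]
  simp_rw [← charFun_apply_real, charFun_gaussianReal]
  rw [← Complex.exp_sum]
  congr 1
  rw [Real.coe_toNNReal _ (Finset.sum_nonneg fun i _ => sq_nonneg _)]
  push_cast
  rw [Finset.sum_sub_distrib, Finset.mul_sum, Finset.sum_mul, Finset.sum_mul, Finset.sum_div]
  congr 1
  · exact Finset.sum_congr rfl fun i _ => by ring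
  · exact Finset.sum_congr rfl fun i _ => by ring

lemma aux_joint {p : ℕ} (m c : Fin p → ℝ) (j : Fin p) (hc : c j = 0) (s : ℝ) (hs : s ^ 2 = 1) :
    (gaussPi m).map (fun x => (∑ i, c i * x i, s * x j))
      = (gaussianReal (∑ i, c i * m i) (∑ i, c i ^ 2).toNNReal).prod
        (gaussianReal (s * m j) 1) := by
  classical
  have hmeas : Measurable (fun x : Fin p → ℝ => ∑ i, c i * x i) := by fun_prop
  have hmeas2 : Measurable (fun x : Fin p → ℝ => s * x j) := by fun_prop
  have hi : iIndepFun (fun i (x : Fin p → ℝ) => x i) (gaussPi m) :=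
    iIndepFun_pi (X := fun _ x => x) fun i => aemeasurable_id
  have h1 := hi.indepFun_finset (Finset.univ.erase j) {j} (by simp) (fun i => measurable_pi_apply i)
  have h2 := h1.comp (φ := fun y : (↥(Finset.univ.erase j) → ℝ) => ∑ i : ↥(Finset.univ.erase j), c i * y i)
    (ψ := fun y : (↥({j} : Finset (Fin p)) → ℝ) => s * y ⟨j, by simp⟩) (by fun_prop) (by fun_prop)
  have h3 : IndepFun (fun x : Fin p → ℝ => ∑ i, c i * x i) (fun x => s * x j) (gaussPi m) := by
    convert! h2 using 1
    ext x
    simp only [Function.comp]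
    rw [Finset.sum_coe_sort (Finset.univ.erase j) (fun i => c i * x i)]
    rw [← Finset.add_sum_erase _ _ (Finset.mem_univ j), hc]
    simp
  rw [(indepFun_iff_map_prod_eq_prod_map_map hmeas.aemeasurable hmeas2.aemeasurable).1 h3,
    aux_law m c]
  congr 1
  have h4 := aux_law m (Pi.single j s)
  have h5 : ∀ x : Fin p → ℝ, ∑ i, (Pi.single j s : Fin p → ℝ) i * x i = s * x j := by
    intro x
    rw [Finset.sum_eq_single j]
    · simp
    · intro b _ hb; simp [hb]
    · simp
  have h6 : ∑ i, (Pi.single j s : Fin p → ℝ) i ^ 2 = 1 := by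
    rw [Finset.sum_eq_single j]
    · simpa using hs
    · intro b _ hb; simp [hb]
    · simp
  simp_rw [h5] at h4
  rw [h4, h6]
  simp
lemma aux_single (p k : ℕ) (hk : 2 ≤ k) (lam : ℝ) (hlam : 0 < lam) (hle : lam / k ≤ 1)
    (S₀ : Finset (Fin p)) (hS : S₀.card = k - 1) (j : Fin p) (hj : j ∉ S₀) :
    ∃ l : (Fin p → ℝ) → ℝ, Measurable l ∧ (∀ x, 0 < l x) ∧
      unlabeledLaw (muVec p k lam (insert j S₀)) =
        (unlabeledLaw (muVec p k lam S₀)).withDensity (fun x => ENNReal.ofReal (l x)) ∧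
      Integrable (fun x => Real.log (l x)) (unlabeledLaw (muVec p k lam (insert j S₀))) ∧
      ∫ x, Real.log (l x) ∂(unlabeledLaw (muVec p k lam (insert j S₀))) ≤
        lam / k / 2 * min 1 lam
          + (1/2 + 8 * Real.exp (3/2)) * Real.sqrt (lam / k) ^ 3 := by
  classical
  set a := Real.sqrt (lam / k) with ha
  have hk0 : (0:ℝ) < k := by positivity
  have ha0 : 0 ≤ a := Real.sqrt_nonneg _
  have ha1 : a ≤ 1 := Real.sqrt_le_one.2 hle
  have ha2 : a ^ 2 = lam / k := Real.sq_sqrt (by positivity)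
  set c := muVec p k lam S₀ with hc
  set m := muVec p k lam (insert j S₀) with hm
  have hcj : c j = 0 := by simp [hc, muVec, hj]
  have hmj : m j = a := by simp [hm, muVec, ha]
  have hmc : ∀ i, i ≠ j → m i = c i := by
    intro i hi; simp [hm, hc, muVec, hi]
  have hm_eq : ∀ i, m i = c i + Pi.single (M := fun _ => ℝ) j a i := by
    intro i
    by_cases hi : i = j
    · subst hi; simp [hmj, hcj]
    · simp [hmc i hi, hi]
  have hsum : ∀ x : Fin p → ℝ, ∑ i, m i * x i = ∑ i, c i * x i + a * x j := by
    intro x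
    rw [← Finset.add_sum_erase _ _ (Finset.mem_univ j),
      ← Finset.add_sum_erase _ (fun i => c i * x i) (Finset.mem_univ j), hmj, hcj,
      Finset.sum_congr rfl fun i hi => by rw [hmc i (Finset.ne_of_mem_erase hi)]]
    ring
  have hcc : ∑ i, c i * m i = ∑ i, c i ^ 2 := by
    refine Finset.sum_congr rfl fun i _ => ?_
    by_cases hi : i = j
    · subst hi; simp [hcj]
    · rw [hmc i hi]; ring
  have hmm : ∑ i, m i ^ 2 = ∑ i, c i ^ 2 + a ^ 2 := by
    have := hsum m
    rw [hmj, hcc] at this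
    calc _ = ∑ i, m i * m i := Finset.sum_congr rfl fun i _ => by ring
      _ = _ := by rw [this]; ring
  have hcv : ∑ i, c i ^ 2 = (k - 1 : ℕ) * (lam / k) := by
    simp only [hc, muVec, ite_pow, Finset.sum_ite_mem, Finset.univ_inter]
    simp [hS, ← ha, ha2]
  set w := ∑ i, c i ^ 2 with hw
  have hw0 : 0 < w := by
    rw [hcv]
    have : 0 < k - 1 := by omega
    positivity
  have hwlam : w ≤ lam := by
    rw [hcv]
    have : ((k-1:ℕ):ℝ) ≤ k := by exact_mod_cast Nat.sub_le _ _
    calc _ ≤ (k:ℝ) * (lam / k) := by gcongr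
      _ = lam := by field_simp
  let T : (Fin p → ℝ) → ℝ := fun x => ∑ i, c i * x i
  have hTm : Measurable T := by fun_prop
  let l : (Fin p → ℝ) → ℝ := fun x =>
    Real.exp (-a^2/2) * (Real.cosh (T x + a * x j) / Real.cosh (T x))
  have hlm : Measurable l := by fun_prop
  have hlpos : ∀ x, 0 < l x := fun x =>
    mul_pos (Real.exp_pos _) (div_pos (Real.cosh_pos _) (Real.cosh_pos _))
  have hlog : ∀ x, Real.log (l x) = -a^2/2 + (Real.log (Real.cosh (T x + a * x j))
      - Real.log (Real.cosh (T x))) := by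
    intro x
    rw [Real.log_mul (Real.exp_pos _).ne' (div_pos (Real.cosh_pos _) (Real.cosh_pos _)).ne',
      Real.log_exp, Real.log_div (Real.cosh_pos _).ne' (Real.cosh_pos _).ne']
  have hF : Continuous fun z : ℝ × ℝ =>
      (-a^2/2 + (Real.log (Real.cosh (z.1 + a * z.2)) - Real.log (Real.cosh z.1))) := by
    refine continuous_const.add (Continuous.sub ?_ ?_)
    · refine Continuous.log (by fun_prop) fun z => (Real.cosh_pos _).ne'
    · refine Continuous.log (by fun_prop) fun z => (Real.cosh_pos _).ne'
  set F : ℝ × ℝ → ℝ := fun z : ℝ × ℝ =>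
      (-a^2/2 + (Real.log (Real.cosh (z.1 + a * z.2)) - Real.log (Real.cosh z.1))) with hFdef
  have hv : w.toNNReal ≠ 0 := by simpa using hw0
  set R := (gaussianReal (w.toNNReal : ℝ) w.toNNReal).prod (gaussianReal a 1) with hR
  have hwc : (w.toNNReal : ℝ) = w := Real.coe_toNNReal _ hw0.le
  have hFint : Integrable F R := by
    obtain ⟨j1, -, -⟩ := aux_moments a
    have B0 : Integrable (fun z : ℝ × ℝ => a * (1 * z.2)) R :=
      ((integrable_const (1:ℝ)).mul_prod j1).const_mul _
    refine (integrable_const _).add (B0.mono ?_ (ae_of_all _ fun z => ?_))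
    · exact (hF.sub (continuous_const (y := -a^2/2))).aestronglyMeasurable.congr
        (ae_of_all _ fun z => by simp [hFdef])
    · rw [one_mul]; exact aux_logcosh_abs _ _
  have J1 : (gaussPi m).map (fun x => (T x, 1 * x j)) = R := by
    rw [aux_joint m c j hcj 1 (by norm_num), hcc, hmj, hR, hwc, one_mul]
  have J2 : (gaussPi (fun i => - m i)).map (fun x => (∑ i, (-c i) * x i, (-1) * x j)) = R := by
    rw [aux_joint (fun i => - m i) (fun i => - c i) j (by simp [hcj]) (-1) (by norm_num)]
    simp only [neg_mul_neg, neg_sq, hmj, one_mul]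
    rw [hcc, hR, hwc]
  have mp1 : Measurable (fun x : Fin p → ℝ => (T x, 1 * x j)) := by fun_prop
  have mp2 : Measurable (fun x : Fin p → ℝ => (∑ i, (-c i) * x i, (-1) * x j)) := by fun_prop
  have c1 : ∀ x, Real.log (l x) = F (T x, 1 * x j) := by
    intro x; rw [hlog, hFdef]; simp
  have c2 : ∀ x, Real.log (l x) = F (∑ i, (-c i) * x i, (-1) * x j) := by
    intro x; rw [hlog, hFdef]
    simp only [neg_mul, Finset.sum_neg_distrib, one_mul, mul_neg, ← neg_add, Real.cosh_neg]
    rfl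
  have I1 : Integrable (fun x => Real.log (l x)) (gaussPi m) := by
    simp_rw [c1]
    rw [← J1] at hFint
    exact hFint.comp_measurable mp1
  have I2 : Integrable (fun x => Real.log (l x)) (gaussPi (fun i => -m i)) := by
    simp_rw [c2]
    rw [← J2] at hFint
    exact hFint.comp_measurable mp2
  have E1 : ∫ x, Real.log (l x) ∂(gaussPi m) = ∫ z, F z ∂(R) := by
    simp_rw [c1]
    rw [← J1, integral_map mp1.aemeasurable hF.aestronglyMeasurable]
  have E2 : ∫ x, Real.log (l x) ∂(gaussPi (fun i => -m i)) = ∫ z, F z ∂(R) := by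
    simp_rw [c2]
    rw [← J2, integral_map mp2.aemeasurable hF.aestronglyMeasurable]
  refine ⟨l, hlm, hlpos, ?_, ?_, ?_⟩
  · rw [aux_unl_density m, aux_unl_density c, ← withDensity_mul _ (by fun_prop) (by fun_prop)]
    congr 1
    ext x
    simp only [Pi.mul_apply]
    rw [← ENNReal.ofReal_mul (mul_pos (Real.exp_pos _) (Real.cosh_pos _)).le]
    congr 1
    rw [hsum, hmm]
    have e : Real.exp (-(w + a^2)/2) = Real.exp (-w/2) * Real.exp (-a^2/2) := by
      rw [← Real.exp_add]; congr 1; ring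
    rw [e]
    have := (Real.cosh_pos (T x)).ne'
    change _ = Real.exp (-w/2) * Real.cosh (T x) *
      (Real.exp (-a^2/2) * (Real.cosh (T x + a * x j) / Real.cosh (T x)))
    field_simp
    rfl
  · unfold unlabeledLaw
    exact (I1.smul_measure (by simp)).add_measure (I2.smul_measure (by simp))
  · unfold unlabeledLaw
    rw [integral_add_measure (I1.smul_measure (by simp)) (I2.smul_measure (by simp)),
      integral_smul_measure, integral_smul_measure, E1, E2]
    have h := aux_twoD w.toNNReal hv a ha0 ha1
    rw [hwc, ha2] at h
    have h2 : lam / k / 2 * min 1 w ≤ lam / k / 2 * min 1 lam := by gcongr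
    have h3 : (∫ z, F z ∂(R)) ≤ lam / k / 2 * min 1 lam + (1/2 + 8 * Real.exp (3/2)) * a ^ 3 := by
      refine le_trans ?_ (h.trans (by linarith))
      apply le_of_eq
      rw [hFdef, hR, hwc, ha2]
    simp only [ENNReal.toReal_inv, ENNReal.toReal_ofNat, smul_eq_mul]
    linarith
lemma aux_step (p k n : ℕ) (hk : 2 ≤ k) (hkp : k ≤ p) (lam : ℝ) (hlam : 0 < lam)
    (hle : lam / k ≤ 1) (est : (Fin n → (Fin p → ℝ)) → Finset (Fin p)) :
    ∃ S ∈ (Finset.univ : Finset (Fin p)).powersetCard k,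
      (1 - ((Measure.pi fun _ : Fin n => unlabeledLaw (muVec p k lam S))
            {d | est d ≠ S}).toReal) * Real.log ((p:ℝ) - k + 1) ≤
      n * (lam / k / 2 * min 1 lam
          + (1/2 + 8 * Real.exp (3/2)) * Real.sqrt (lam / k) ^ 3) + Real.log 2 := by
  classical
  obtain ⟨S₀, -, hS₀⟩ := Finset.exists_subset_card_eq (s := (Finset.univ : Finset (Fin p)))
    (n := k - 1) (by simp; omega)
  set M : ℝ := (p:ℝ) - k + 1 with hM
  have hkp' : (k:ℝ) ≤ p := by exact_mod_cast hkp
  have hM1 : 1 ≤ M := by rw [hM]; linarith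
  have hcard : ((S₀ᶜ.card : ℕ) : ℝ) = M := by
    rw [Finset.card_compl, hS₀, Fintype.card_fin, Nat.cast_sub (by omega), Nat.cast_sub (by omega), hM]
    push_cast; ring
  let Pn : Fin p → Measure (Fin n → (Fin p → ℝ)) := fun j =>
    Measure.pi fun _ : Fin n => unlabeledLaw (muVec p k lam (insert j S₀))
  let Qn : Measure (Fin n → (Fin p → ℝ)) :=
    Measure.pi fun _ : Fin n => unlabeledLaw (muVec p k lam S₀)
  let D : Fin p → Set (Fin n → (Fin p → ℝ)) := fun j =>
    (toMeasurable (Pn j) {d | est d ≠ insert j S₀})ᶜ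
  have hDm : ∀ j, MeasurableSet (D j) := fun j => (measurableSet_toMeasurable _ _).compl
  have hDsub : ∀ j, ∀ d ∈ D j, est d = insert j S₀ := by
    intro j d hd
    by_contra hne
    exact hd (subset_toMeasurable _ _ hne)
  have hdisj : Set.PairwiseDisjoint (↑(S₀ᶜ) : Set (Fin p)) D := by
    intro i hi j hj hij
    rw [Function.onFun, Set.disjoint_left]
    intro d hd hd'
    have h1 := hDsub i d hd
    rw [hDsub j d hd'] at h1
    have : i ∈ insert j S₀ := by rw [h1]; exact Finset.mem_insert_self _ _
    rcases Finset.mem_insert.1 this with h | h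
    · exact hij h
    · simp at hi; exact hi h
  have hex : ∃ j ∈ S₀ᶜ, Qn.real (D j) ≤ 1 / M := by
    by_contra! hcon
    have hne : (S₀ᶜ).Nonempty := by
      rw [← Finset.card_pos]
      have : (0:ℝ) < (S₀ᶜ.card : ℕ) := by rw [hcard]; linarith
      exact_mod_cast this
    have h1 := Finset.sum_lt_sum_of_nonempty hne hcon
    rw [Finset.sum_const, nsmul_eq_mul, hcard, mul_one_div_cancel (by linarith),
      ← measureReal_biUnion_finset hdisj fun j _ => hDm j] at h1
    exact absurd h1 (not_lt.2 measureReal_le_one)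
  obtain ⟨j, hj, hQ⟩ := hex
  have hj' : j ∉ S₀ := by simpa using hj
  obtain ⟨l, hlm, hlpos, hden, hint, hval⟩ := aux_single p k hk lam hlam hle S₀ hS₀ j hj'
  refine ⟨insert j S₀, ?_, ?_⟩
  · rw [Finset.mem_powersetCard]
    refine ⟨Finset.subset_univ _, ?_⟩
    rw [Finset.card_insert_of_notMem hj', hS₀]; omega
  · have hf := aux_fano _ _ l hlm hlpos hden hint n (D j) (hDm j) M hM1 hQ
    have hP : (Pn j).real (D j) = 1 - (Pn j {d | est d ≠ insert j S₀}).toReal := by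
      rw [probReal_compl_eq_one_sub (measurableSet_toMeasurable _ _), measureReal_def,
        measure_toMeasurable]
    change (Pn j).real (D j) * _ ≤ _ at hf
    rw [hP] at hf
    refine hf.trans ?_
    gcongr

theorem stmt1 (δ lam : ℝ) (hδ : δ ∈ Set.Ioo (0 : ℝ) 1) (hlam : 0 < lam)
    (p k n : ℕ → ℕ)
    (hp : Tendsto p atTop atTop) (hk : Tendsto k atTop atTop) (hn : Tendsto n atTop atTop)
    (hkp : Tendsto (fun t => (k t : ℝ) / (p t : ℝ)) atTop (nhds 0))
    (hbound : ∀ t, (n t : ℝ) <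
      2 * (1 - δ) * (k t : ℝ) / lam ^ 2 * Real.log ((p t : ℝ) - (k t : ℝ) + 1) * max 1 lam)
    (est : ∀ t : ℕ, (Fin (n t) → (Fin (p t) → ℝ)) → Finset (Fin (p t))) :
    δ ≤ liminf (fun t : ℕ =>
      ⨆ S ∈ Finset.univ.powersetCard (k t),
        ((Measure.pi fun _ : Fin (n t) => unlabeledLaw (muVec (p t) (k t) lam S))
            {d | est t d ≠ S}).toReal) atTop := by
  obtain ⟨hδ0, hδ1⟩ := hδ
  set C : ℝ := 1/2 + 8 * Real.exp (3/2) with hC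
  have hC0 : 0 < C := by positivity
  set K0 : ℝ := 2 * (1 - δ) * max 1 lam * C / lam with hK0
  set f : ℕ → ℝ := fun t : ℕ =>
      ⨆ S ∈ Finset.univ.powersetCard (k t),
        ((Measure.pi fun _ : Fin (n t) => unlabeledLaw (muVec (p t) (k t) lam S))
            {d | est t d ≠ S}).toReal with hf
  set g : ℕ → ℝ := fun t => δ - K0 * Real.sqrt (lam / k t)
    - Real.log 2 / Real.log ((p t : ℝ) - (k t : ℝ) + 1) with hg
  have herr1 : ∀ t S, ((Measure.pi fun _ : Fin (n t) => unlabeledLaw (muVec (p t) (k t) lam S))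
            {d | est t d ≠ S}).toReal ≤ 1 := fun t S => measureReal_le_one
  have hinner : ∀ t S, (⨆ _ : S ∈ Finset.univ.powersetCard (k t),
        ((Measure.pi fun _ : Fin (n t) => unlabeledLaw (muVec (p t) (k t) lam S))
            {d | est t d ≠ S}).toReal) ≤ 1 := fun t S =>
    Real.iSup_le (fun _ => herr1 t S) zero_le_one
  have hf1 : ∀ t, f t ≤ 1 := fun t => Real.iSup_le (fun S => hinner t S) zero_le_one
  have hfS : ∀ t, ∀ S ∈ (Finset.univ : Finset (Fin (p t))).powersetCard (k t),
      ((Measure.pi fun _ : Fin (n t) => unlabeledLaw (muVec (p t) (k t) lam S))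
            {d | est t d ≠ S}).toReal ≤ f t := by
    intro t S hS
    have h1 := le_ciSup (f := fun S => ⨆ _ : S ∈ Finset.univ.powersetCard (k t),
        ((Measure.pi fun _ : Fin (n t) => unlabeledLaw (muVec (p t) (k t) lam S))
            {d | est t d ≠ S}).toReal) ⟨1, by rintro _ ⟨S, rfl⟩; exact hinner t S⟩ S
    refine le_trans ?_ h1
    simp only [ciSup_pos hS, le_refl]
  -- limits
  have hkR : Tendsto (fun t => (k t : ℝ)) atTop atTop := tendsto_natCast_atTop_atTop.comp hk
  have hpR : Tendsto (fun t => (p t : ℝ)) atTop atTop := tendsto_natCast_atTop_atTop.comp hp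
  have hlk : Tendsto (fun t => lam / (k t : ℝ)) atTop (nhds 0) := hkR.const_div_atTop lam
  have hsq : Tendsto (fun t => Real.sqrt (lam / (k t : ℝ))) atTop (nhds 0) := by
    have := (Real.continuous_sqrt.tendsto 0).comp hlk
    rw [Real.sqrt_zero] at this
    exact this
  have hhalf : ∀ᶠ t in atTop, (k t : ℝ) ≤ (p t : ℝ) / 2 := by
    filter_upwards [hkp.eventually (gt_mem_nhds (show (0:ℝ) < 1/2 by norm_num)),
      hpR.eventually_gt_atTop 0] with t h1 h2
    rw [div_lt_iff₀ h2] at h1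
    linarith
  have hMt : Tendsto (fun t => (p t : ℝ) - (k t : ℝ) + 1) atTop atTop := by
    refine tendsto_atTop_mono' atTop ?_ (hpR.atTop_div_const (show (0:ℝ) < 2 by norm_num))
    filter_upwards [hhalf] with t ht
    linarith
  have hlogM : Tendsto (fun t => Real.log ((p t : ℝ) - (k t : ℝ) + 1)) atTop atTop :=
    Real.tendsto_log_atTop.comp hMt
  have hglim : Tendsto g atTop (nhds δ) := by
    have h1 := ((tendsto_const_nhds (x := δ)).sub (hsq.const_mul K0)).sub
      (hlogM.const_div_atTop (Real.log 2))
    rw [mul_zero, sub_zero, sub_zero] at h1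
    exact h1
  have hgf : ∀ᶠ t in atTop, g t ≤ f t := by
    filter_upwards [hhalf, hk.eventually_ge_atTop 2, hlogM.eventually_gt_atTop 0,
      hlk.eventually (gt_mem_nhds (show (0:ℝ) < 1 by norm_num))] with t h1 h2 h3 h4
    have hkp' : k t ≤ p t := by
      have : (k t : ℝ) ≤ p t := by
        have : (0:ℝ) ≤ p t := by positivity
        linarith
      exact_mod_cast this
    obtain ⟨S, hS, hb⟩ := aux_step (p t) (k t) (n t) h2 hkp' lam hlam h4.le (est t)
    refine le_trans ?_ (hfS t S hS)
    have hnb := (hbound t).le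
    set e := ((Measure.pi fun _ : Fin (n t) => unlabeledLaw (muVec (p t) (k t) lam S))
            {d | est t d ≠ S}).toReal
    set Lg := Real.log ((p t : ℝ) - (k t : ℝ) + 1) with hLg
    set a := Real.sqrt (lam / k t) with ha
    have hk0 : (0:ℝ) < k t := by
      have : 0 < k t := by omega
      exact_mod_cast this
    have ha0 : 0 ≤ a := Real.sqrt_nonneg _
    have ha2 : a ^ 2 = lam / k t := Real.sq_sqrt (by positivity)
    have hmm : min 1 lam * max 1 lam = lam := by rw [min_mul_max, one_mul]
    have hmin : 0 < min 1 lam := lt_min one_pos hlam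
    have e1 : (n t : ℝ) * (lam / k t / 2 * min 1 lam + C * a ^ 3)
        ≤ (1 - δ) * Lg + K0 * a * Lg := by
      have hnn : 0 ≤ lam / k t / 2 * min 1 lam + C * a ^ 3 := by positivity
      refine (mul_le_mul_of_nonneg_right hnb hnn).trans (le_of_eq ?_)
      have e3 : a ^ 3 = lam / k t * a := by rw [← ha2]; ring
      rw [e3, hK0]
      have e4 : 2 * (1 - δ) * (k t : ℝ) / lam ^ 2 * Lg * max 1 lam *
          (lam / k t / 2 * min 1 lam + C * (lam / k t * a))
          = (1 - δ) * Lg * (min 1 lam * max 1 lam) / lam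
            + 2 * (1 - δ) * max 1 lam * C / lam * a * Lg := by
        field_simp
      rw [e4, hmm]
      field_simp
    have e2 : (1 - e) * Lg ≤ (1 - δ) * Lg + K0 * a * Lg + Real.log 2 := by
      have hb' : (1 - e) * Lg ≤ n t * (lam / k t / 2 * min 1 lam + C * a ^ 3)
        + Real.log 2 := hb
      linarith
    have e5 : (g t) * Lg ≤ e * Lg := by
      have : g t * Lg = δ * Lg - K0 * a * Lg - Real.log 2 := by
        simp only [hg]
        rw [← hLg, ← ha]
        field_simp
      rw [this]; linarith
    exact le_of_mul_le_mul_right e5 h3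
  rw [← hglim.liminf_eq]
  refine liminf_le_liminf hgf ?_ ?_
  · exact hglim.isBoundedUnder_ge
  · exact (isBoundedUnder_of ⟨1, fun t => hf1 t⟩ : IsBoundedUnder (· ≤ ·) atTop f).isCoboundedUnder_ge
end
end

section
/- Fix δ ∈ (0,1). Let (L₀, n₀, p, k) → ∞ with k/p → 0 be such that L₀ < 2(1−δ)·(k/λ)·log(p−k+1) and n₀ < 2(1−δ)·(k/λ²)·log(p−k+1)·max{1, λ}. Suppose the numbers of labeled and unlabeled samples satisfy L = ⌊q L₀⌋ and n = ⌊(1−q) n₀⌋ for some q ∈ [0,1]. Then for any estimator Ŝ of the support based on D_L ∪ D_n, as p → ∞, max over k-element supports S of P(Ŝ ≠ S) ≥ δ. -/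
open MeasureTheory ProbabilityTheory Filter
open scoped ENNReal NNReal

noncomputable section

lemma lint_pi_prod {α : Type*} [MeasurableSpace α] :
    ∀ (n : ℕ) (Q : Fin n → Measure α) (_ : ∀ i, SigmaFinite (Q i)) (f : Fin n → α → ℝ≥0∞)
      (_ : ∀ i, Measurable (f i)),
      ∫⁻ x, ∏ i, f i (x i) ∂(Measure.pi Q) = ∏ i, ∫⁻ x, f i x ∂(Q i) := by
  intro n
  induction n with
  | zero => intro Q hQ f hf; simp
  | succ n ih =>
    intro Q hQ f hf
    have := (measurePreserving_piFinSuccAbove Q 0).symm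
    rw [← this.lintegral_comp_emb (MeasurableEquiv.measurableEmbedding _)]
    simp only [Fin.prod_univ_succ, MeasurableEquiv.piFinSuccAbove_symm_apply, Fin.insertNthEquiv,
      Equiv.coe_fn_mk, Fin.insertNth_zero', Fin.cons_zero, Fin.cons_succ, Fin.zero_succAbove]
    rw [lintegral_prod_mul (f := f 0) (g := fun y : Fin n → α => ∏ i, f i.succ (y i)) (hf 0).aemeasurable,
      ih _ (fun i => hQ _) _ (fun i => hf _)]
    exact (Finset.measurable_prod _ fun i _ => (hf i.succ).comp (measurable_pi_apply i)).aemeasurable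

lemma pi_wd {α : Type*} [MeasurableSpace α] (n : ℕ) (P Q : Fin n → Measure α)
    (hPs : ∀ i, SigmaFinite (P i)) (hQs : ∀ i, SigmaFinite (Q i)) (R : Fin n → α → ℝ≥0∞)
    (hR : ∀ i, Measurable (R i)) (hP : ∀ i, P i = (Q i).withDensity (R i)) :
    Measure.pi P = (Measure.pi Q).withDensity (fun x => ∏ i, R i (x i)) := by
  symm
  refine (Measure.pi_eq fun s hs => ?_).symm
  rw [withDensity_apply _ (MeasurableSet.univ_pi hs), ← lintegral_indicator (MeasurableSet.univ_pi hs)]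
  have : ∀ x : Fin n → α, (Set.univ.pi s).indicator (fun x => ∏ i, R i (x i)) x
      = ∏ i, (s i).indicator (R i) (x i) := by
    intro x
    by_cases h : x ∈ Set.univ.pi s
    · rw [Set.indicator_of_mem h]
      refine Finset.prod_congr rfl fun i _ => ?_
      rw [Set.indicator_of_mem (h i (Set.mem_univ i))]
    · rw [Set.indicator_of_notMem h]
      simp only [Set.mem_pi, Set.mem_univ, true_imp_iff, not_forall] at h
      obtain ⟨i, hi⟩ := h
      symm
      exact Finset.prod_eq_zero (Finset.mem_univ i) (Set.indicator_of_notMem hi _)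
  simp_rw [this]
  rw [lint_pi_prod n Q hQs _ (fun i => (hR i).indicator (hs i))]
  refine Finset.prod_congr rfl fun i _ => ?_
  rw [lintegral_indicator (hs i), hP i, withDensity_apply _ (hs i)]

/-- `P` has a density w.r.t. `Q` with `(1+s)`-th moment at most `B`. -/
def Dom {α : Type*} [MeasurableSpace α] (s : ℝ) (P Q : Measure α) (B : ℝ≥0∞) : Prop :=
  ∃ R : α → ℝ≥0∞, Measurable R ∧ P = Q.withDensity R ∧ ∫⁻ x, R x ^ (1 + s) ∂Q ≤ B

lemma Dom.pi {α : Type*} [MeasurableSpace α] {s : ℝ} (hs : 0 ≤ s) {P Q : Measure α}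
    [IsProbabilityMeasure P] [IsProbabilityMeasure Q] {B : ℝ≥0∞} (h : Dom s P Q B) (n : ℕ) :
    Dom s (Measure.pi fun _ : Fin n => P) (Measure.pi fun _ : Fin n => Q) (B ^ n) := by
  obtain ⟨R, hR, hP, hB⟩ := h
  refine ⟨fun x => ∏ i, R (x i), ?_, ?_, ?_⟩
  · exact Finset.measurable_prod _ fun i _ => hR.comp (measurable_pi_apply i)
  · exact pi_wd n _ _ (fun _ => inferInstance) (fun _ => inferInstance) (fun _ => R) (fun _ => hR)
      (fun _ => hP)
  · have : ∀ x : Fin n → α, (∏ i, R (x i)) ^ (1 + s) = ∏ i, (R (x i)) ^ (1 + s) := by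
      intro x
      rw [ENNReal.prod_rpow_of_nonneg (by linarith)]
    simp_rw [this]
    rw [lint_pi_prod n _ (fun _ => inferInstance) (fun _ x => R x ^ (1 + s)) (fun _ => hR.pow_const _)]
    simp only [Finset.prod_const, Finset.card_univ, Fintype.card_fin]
    gcongr

lemma Dom.prod {α β : Type*} [MeasurableSpace α] [MeasurableSpace β] {s : ℝ} (hs : 0 ≤ s)
    {P Q : Measure α} {P' Q' : Measure β}
    [IsProbabilityMeasure P] [IsProbabilityMeasure Q]
    [IsProbabilityMeasure P'] [IsProbabilityMeasure Q'] {B B' : ℝ≥0∞}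
    (h : Dom s P Q B) (h' : Dom s P' Q' B') :
    Dom s (P.prod P') (Q.prod Q') (B * B') := by
  obtain ⟨R, hR, hP, hB⟩ := h
  obtain ⟨R', hR', hP', hB'⟩ := h'
  refine ⟨fun x => R x.1 * R' x.2, by fun_prop, ?_, ?_⟩
  · have : SFinite (Q.withDensity R) := by rw [← hP]; infer_instance
    rw [hP, hP', prod_withDensity hR hR']
  · simp_rw [ENNReal.mul_rpow_of_nonneg _ _ (by linarith : 0 ≤ 1 + s)]
    rw [lintegral_prod_mul (f := fun x => R x ^ (1 + s)) (g := fun x => R' x ^ (1 + s))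
      (hR.pow_const _).aemeasurable (hR'.pow_const _).aemeasurable]
    gcongr

lemma Dom.bound {α : Type*} [MeasurableSpace α] {s : ℝ} (hs : 0 < s)
    {P Q : Measure α} {B : ℝ≥0∞} (h : Dom s P Q B) (K : ℝ) (hK : 0 < K) (C : Set α)
    (hC : MeasurableSet C) :
    P C ≤ ENNReal.ofReal K * Q C + ENNReal.ofReal (K ^ (-s)) * B := by
  obtain ⟨R, hR, hP, hB⟩ := h
  have key : ∀ x, R x ≤ ENNReal.ofReal K + ENNReal.ofReal (K ^ (-s)) * R x ^ (1 + s) := by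
    intro x
    rcases le_total (R x) (ENNReal.ofReal K) with h | h
    · exact le_add_right h
    · refine le_add_left ?_
      have h1 : 1 ≤ ENNReal.ofReal (K ^ (-s)) * R x ^ s := by
        have : ENNReal.ofReal K ^ s ≤ R x ^ s := ENNReal.rpow_le_rpow h hs.le
        calc (1 : ℝ≥0∞) = ENNReal.ofReal (K ^ (-s)) * ENNReal.ofReal K ^ s := by
              rw [ENNReal.ofReal_rpow_of_pos hK, ← ENNReal.ofReal_mul (by positivity),
                ← Real.rpow_add hK]; simp
          _ ≤ _ := by gcongr
      have h2 : R x ^ (1 + s) = R x ^ s * R x := by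
        rw [add_comm, ENNReal.rpow_add_of_nonneg _ _ hs.le zero_le_one, ENNReal.rpow_one]
      rw [h2, ← mul_assoc]
      calc R x = 1 * R x := (one_mul _).symm
        _ ≤ _ := by gcongr
  calc P C = ∫⁻ x in C, R x ∂Q := by rw [hP, withDensity_apply _ hC]
    _ ≤ ∫⁻ x in C, (ENNReal.ofReal K + ENNReal.ofReal (K ^ (-s)) * R x ^ (1 + s)) ∂Q :=
        lintegral_mono key
    _ = ENNReal.ofReal K * Q C + ENNReal.ofReal (K ^ (-s)) * ∫⁻ x in C, R x ^ (1 + s) ∂Q := by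
        rw [lintegral_add_left measurable_const, lintegral_const_mul _ (hR.pow_const _)]
        simp
    _ ≤ _ := by
        gcongr
        exact (setLIntegral_le_lintegral _ _).trans hB

/-- The testing lower bound for arbitrary (possibly non-measurable) estimators. -/
lemma test_bound {α ι J : Type*} [MeasurableSpace α] {s : ℝ} (hs : 0 < s)
    (T : Finset J) (hT : T.Nonempty) (φ : J → ι) (hφ : Set.InjOn φ T)
    (P : J → Measure α) (Q : Measure α)
    [∀ j, IsProbabilityMeasure (P j)] [IsProbabilityMeasure Q] (B : ℝ)
    (h : ∀ j ∈ T, Dom s (P j) Q (ENNReal.ofReal B)) (hB : 0 ≤ B) (K : ℝ) (hK : 0 < K) (est : α → ι) :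
    ∃ j ∈ T, 1 - (K / T.card + K ^ (-s) * B) ≤ ((P j) {d | est d ≠ φ j}).toReal := by
  set C : J → Set α := fun j => (toMeasurable (P j) {d | est d ≠ φ j})ᶜ with hCdef
  have hCm : ∀ j, MeasurableSet (C j) := fun j => (measurableSet_toMeasurable _ _).compl
  have hCs : ∀ j, ∀ x ∈ C j, est x = φ j := by
    intro j x hx
    by_contra hne
    exact hx (subset_toMeasurable _ _ hne)
  have hdis : (T : Set J).PairwiseDisjoint C := by
    intro i hi j hj hij
    refine Set.disjoint_left.2 fun x hx hx' => hij (hφ hi hj ?_)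
    rw [← hCs i x hx, hCs j x hx']
  have hsum : ∑ j ∈ T, (Q (C j)).toReal ≤ 1 := by
    rw [← ENNReal.toReal_sum (fun _ _ => measure_ne_top _ _),
      ← measure_biUnion_finset hdis (fun j _ => hCm j)]
    exact measureReal_le_one
  have hcard : (0 : ℝ) < T.card := by exact_mod_cast hT.card_pos
  obtain ⟨j, hj, hjle⟩ : ∃ j ∈ T, (Q (C j)).toReal ≤ 1 / T.card := by
    refine Finset.exists_le_of_sum_le hT ?_
    simpa [hcard.ne'] using hsum
  refine ⟨j, hj, ?_⟩
  have hb := (h j hj).bound hs K hK (C j) (hCm j)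
  have h1 : ((P j) (C j)).toReal = 1 - ((P j) {d | est d ≠ φ j}).toReal := by
    have := probReal_compl_eq_one_sub (μ := P j)
      (measurableSet_toMeasurable (P j) {d | est d ≠ φ j})
    simp only [Measure.real] at this
    rw [hCdef]
    simp only
    rw [this, measure_toMeasurable]
  have h2 := ENNReal.toReal_mono (by finiteness) hb
  rw [ENNReal.toReal_add (by finiteness) (by finiteness), ENNReal.toReal_mul, ENNReal.toReal_mul,
    ENNReal.toReal_ofReal hK.le, ENNReal.toReal_ofReal (by positivity), ENNReal.toReal_ofReal hB, h1] at h2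
  have h3 : K * (Q (C j)).toReal ≤ K / T.card := by
    calc K * (Q (C j)).toReal ≤ K * (1 / T.card) := by gcongr
      _ = _ := by ring
  linarith

open scoped Matrix

instance gaussPi_prob {p : ℕ} (m : Fin p → ℝ) : IsProbabilityMeasure (gaussPi m) := by
  unfold gaussPi; infer_instance

instance labeledLaw_prob {p : ℕ} (m : Fin p → ℝ) : IsProbabilityMeasure (labeledLaw m) := by
  constructor
  unfold labeledLaw
  simp only [Measure.coe_add, Measure.coe_smul, Pi.add_apply, Pi.smul_apply, smul_eq_mul]
  rw [Measure.map_apply (by fun_prop) MeasurableSet.univ,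
    Measure.map_apply (by fun_prop) MeasurableSet.univ]
  simp [ENNReal.inv_two_add_inv_two]

instance unlabeledLaw_prob {p : ℕ} (m : Fin p → ℝ) : IsProbabilityMeasure (unlabeledLaw m) := by
  constructor
  unfold unlabeledLaw
  simp [ENNReal.inv_two_add_inv_two]

/-- `f` is integrable with integral `v`. -/
def HI {α : Type*} [MeasurableSpace α] (γ : Measure α) (f : α → ℝ) (v : ℝ) : Prop :=
  Integrable f γ ∧ ∫ x, f x ∂γ = v

lemma HI.add {α : Type*} [MeasurableSpace α] {γ : Measure α} {f g : α → ℝ} {v w : ℝ}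
    (hf : HI γ f v) (hg : HI γ g w) : HI γ (fun x => f x + g x) (v + w) :=
  ⟨hf.1.add hg.1, by rw [integral_add hf.1 hg.1, hf.2, hg.2]⟩

lemma HI.cmul {α : Type*} [MeasurableSpace α] {γ : Measure α} {f : α → ℝ} {v : ℝ}
    (hf : HI γ f v) (a : ℝ) : HI γ (fun x => a * f x) (a * v) :=
  ⟨hf.1.const_mul a, by rw [integral_const_mul, hf.2]⟩

lemma HI.lint {α : Type*} [MeasurableSpace α] {γ : Measure α} {f : α → ℝ} {v : ℝ}
    (hf : HI γ f v) (h0 : ∀ x, 0 ≤ f x) : ∫⁻ x, ENNReal.ofReal (f x) ∂γ = ENNReal.ofReal v := by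
  rw [← hf.2, ofReal_integral_eq_lintegral_ofReal hf.1 (ae_of_all _ h0)]

lemma HI_exp {p : ℕ} (c : Fin p → ℝ) :
    HI (gaussPi (0 : Fin p → ℝ)) (fun x => Real.exp (c ⬝ᵥ x)) (Real.exp (c ⬝ᵥ c / 2)) := by
  have h : (fun x : Fin p → ℝ => Real.exp (c ⬝ᵥ x)) = fun x => ∏ i, Real.exp (c i * x i) := by
    ext x; rw [← Real.exp_sum]; rfl
  unfold HI gaussPi
  rw [h]
  constructor
  · exact Integrable.fintype_prod (f := fun i y => Real.exp (c i * y))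
      (fun i => integrable_exp_mul_gaussianReal (c i))
  · rw [integral_fintype_prod_eq_prod (fun i y => Real.exp (c i * y))]
    have : ∀ i, ∫ y, Real.exp (c i * y) ∂(gaussianReal ((0 : Fin p → ℝ) i) 1)
        = Real.exp (c i * c i / 2) := by
      intro i
      have := congrFun (mgf_id_gaussianReal (μ := 0) (v := 1)) (c i)
      simp only [mgf, id] at this
      simp only [Pi.zero_apply]
      rw [this]; congr 1; simp; ring
    simp_rw [this]
    rw [← Real.exp_sum, ← Finset.sum_div]; rfl

lemma HI_cosh {p : ℕ} (c : Fin p → ℝ) :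
    HI (gaussPi (0 : Fin p → ℝ)) (fun x => Real.cosh (c ⬝ᵥ x)) (Real.exp (c ⬝ᵥ c / 2)) := by
  have h := ((HI_exp c).cmul (1/2)).add ((HI_exp (-c)).cmul (1/2))
  convert h using 1
  · ext x; rw [Real.cosh_eq, neg_dotProduct]; ring
  · simp only [neg_dotProduct, dotProduct_neg, neg_neg]; ring

lemma meas_dot {p : ℕ} (c : Fin p → ℝ) : Measurable (fun x : Fin p → ℝ => c ⬝ᵥ x) := by
  unfold dotProduct; fun_prop

lemma gaussianReal_wd (m : ℝ) : gaussianReal m 1 = (gaussianReal 0 1).withDensity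
    (fun x => ENNReal.ofReal (Real.exp (m * x - m * m / 2))) := by
  rw [gaussianReal_of_var_ne_zero _ one_ne_zero, gaussianReal_of_var_ne_zero _ one_ne_zero,
    ← withDensity_mul _ (by fun_prop) (by fun_prop)]
  congr 1
  ext x
  simp only [gaussianPDF, gaussianPDFReal, Pi.mul_apply]
  rw [← ENNReal.ofReal_mul (by positivity), mul_assoc (_)⁻¹, ← Real.exp_add]
  congr 3
  simp; ring

lemma gaussPi_wd {p : ℕ} (c : Fin p → ℝ) : gaussPi c = (gaussPi (0 : Fin p → ℝ)).withDensity
    (fun x => ENNReal.ofReal (Real.exp (c ⬝ᵥ x - c ⬝ᵥ c / 2))) := by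
  unfold gaussPi
  rw [pi_wd p (fun j => gaussianReal (c j) 1) (fun j => gaussianReal ((0 : Fin p → ℝ) j) 1)
    (fun _ => inferInstance) (fun _ => inferInstance)
    (fun j x => ENNReal.ofReal (Real.exp (c j * x - c j * c j / 2)))
    (fun j => by fun_prop) (fun j => gaussianReal_wd (c j))]
  congr 1
  ext x
  rw [← ENNReal.ofReal_prod_of_nonneg (fun _ _ => (Real.exp_pos _).le), ← Real.exp_sum,
    Finset.sum_sub_distrib, ← Finset.sum_div]
  rfl

lemma gaussPi_wd' {p : ℕ} (c e : Fin p → ℝ) (hce : c ⬝ᵥ e = 0) :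
    gaussPi (c + e) = (gaussPi c).withDensity
    (fun x => ENNReal.ofReal (Real.exp (e ⬝ᵥ x - e ⬝ᵥ e / 2))) := by
  have h1 := meas_dot c
  have h2 := meas_dot e
  rw [gaussPi_wd (c + e), gaussPi_wd c, ← withDensity_mul _ (by fun_prop) (by fun_prop)]
  congr 1
  ext x
  simp only [Pi.mul_apply]
  rw [← ENNReal.ofReal_mul (by positivity), ← Real.exp_add]
  congr 2
  simp only [add_dotProduct, dotProduct_add, dotProduct_comm e c, hce]
  ring

lemma lint_gaussPi {p : ℕ} (c d : Fin p → ℝ) (hcd : c ⬝ᵥ d = 0) (b : ℝ) :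
    ∫⁻ x, ENNReal.ofReal (Real.exp (d ⬝ᵥ x + b)) ∂(gaussPi c)
      = ENNReal.ofReal (Real.exp (d ⬝ᵥ d / 2 + b)) := by
  have h1 := meas_dot c
  have h2 := meas_dot d
  rw [gaussPi_wd c, lintegral_withDensity_eq_lintegral_mul _ (by fun_prop) (by fun_prop)]
  have h := ((HI_exp (c + d)).cmul (Real.exp (b - c ⬝ᵥ c / 2))).lint (fun x => by positivity)
  rw [← Real.exp_add] at h
  have e1 : b - c ⬝ᵥ c / 2 + (c + d) ⬝ᵥ (c + d) / 2 = d ⬝ᵥ d / 2 + b := by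
    simp only [add_dotProduct, dotProduct_add, dotProduct_comm d c, hcd]
    ring
  rw [← e1, ← h]
  refine lintegral_congr fun x => ?_
  simp only [Pi.mul_apply]
  rw [← ENNReal.ofReal_mul (by positivity), ← Real.exp_add, ← Real.exp_add]
  congr 2
  simp only [add_dotProduct]
  ring

lemma map_wd {α β : Type*} [MeasurableSpace α] [MeasurableSpace β] (μ : Measure α) (f : α → β)
    (hf : Measurable f) (R : β → ℝ≥0∞) (hR : Measurable R) :
    (μ.map f).withDensity R = (μ.withDensity (fun x => R (f x))).map f := by
  ext A hA
  rw [withDensity_apply _ hA, Measure.map_apply hf hA, withDensity_apply _ (hf hA),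
    setLIntegral_map hA hR hf]

lemma labeled_dom {p : ℕ} (s : ℝ) (c e : Fin p → ℝ) (hce : c ⬝ᵥ e = 0) :
    Dom s (labeledLaw (c + e)) (labeledLaw c)
      (ENNReal.ofReal (Real.exp (s * (1 + s) * (e ⬝ᵥ e) / 2))) := by
  have h2 := meas_dot e
  have hm : Measurable (fun d : (Fin p → ℝ) × ℝ =>
      ENNReal.ofReal (Real.exp (d.2 * (e ⬝ᵥ d.1) - e ⬝ᵥ e / 2))) := by fun_prop
  refine ⟨fun d => ENNReal.ofReal (Real.exp (d.2 * (e ⬝ᵥ d.1) - e ⬝ᵥ e / 2)), hm, ?_, ?_⟩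
  · unfold labeledLaw
    rw [withDensity_add_measure, withDensity_smul_measure, withDensity_smul_measure,
      map_wd _ _ (by fun_prop) _ hm, map_wd _ _ (by fun_prop) _ hm]
    congr 3
    · rw [gaussPi_wd' c e hce]
      simp
    · have := gaussPi_wd' (-c) (-e) (by simp [hce])
      have e1 : (fun j => -(c + e) j) = -c + -e := by ext j; simp; ring
      have e2 : (fun j => -c j) = -c := rfl
      rw [e1, e2, this]
      simp
  · have hm' := hm.pow_const (1 + s)
    unfold labeledLaw
    rw [lintegral_add_measure, lintegral_smul_measure, lintegral_smul_measure,
      lintegral_map hm' (by fun_prop), lintegral_map hm' (by fun_prop)]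
    have k1 := lint_gaussPi c ((1 + s) • e) (by simp [hce]) (-((1 + s) * (e ⬝ᵥ e / 2)))
    have k2 := lint_gaussPi (-c) (-((1 + s) • e)) (by simp [hce]) (-((1 + s) * (e ⬝ᵥ e / 2)))
    have e2 : (fun j => -c j) = -c := rfl
    have q1 : ∀ x : Fin p → ℝ, ENNReal.ofReal (Real.exp (1 * (e ⬝ᵥ x) - e ⬝ᵥ e / 2)) ^ (1 + s)
        = ENNReal.ofReal (Real.exp (((1 + s) • e) ⬝ᵥ x + (-((1 + s) * (e ⬝ᵥ e / 2))))) := by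
      intro x
      rw [ENNReal.ofReal_rpow_of_pos (Real.exp_pos _), ← Real.exp_mul]
      congr 2; simp; ring
    have q2 : ∀ x : Fin p → ℝ, ENNReal.ofReal (Real.exp ((-1) * (e ⬝ᵥ x) - e ⬝ᵥ e / 2)) ^ (1 + s)
        = ENNReal.ofReal (Real.exp ((-((1 + s) • e)) ⬝ᵥ x + (-((1 + s) * (e ⬝ᵥ e / 2))))) := by
      intro x
      rw [ENNReal.ofReal_rpow_of_pos (Real.exp_pos _), ← Real.exp_mul]
      congr 2; simp; ring
    simp_rw [q1, q2]
    rw [e2, k1, k2, ← smul_add, smul_eq_mul]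
    simp only [neg_dotProduct, dotProduct_neg, mul_neg, neg_neg, smul_dotProduct, dotProduct_smul, smul_eq_mul]
    rw [← two_mul, ← mul_assoc, ENNReal.inv_mul_cancel (by simp) (by simp), one_mul]
    apply ENNReal.ofReal_le_ofReal
    apply Real.exp_le_exp.2
    apply le_of_eq; ring

lemma unlabeled_wd {p : ℕ} (c : Fin p → ℝ) : unlabeledLaw c =
    (gaussPi (0 : Fin p → ℝ)).withDensity
    (fun x => ENNReal.ofReal (Real.exp (-(c ⬝ᵥ c) / 2) * Real.cosh (c ⬝ᵥ x))) := by
  have h1 := meas_dot c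
  have h2 := meas_dot (-c)
  have e2 : (fun j => -c j) = -c := rfl
  unfold unlabeledLaw
  rw [e2, gaussPi_wd c, gaussPi_wd (-c), ← withDensity_smul _ (by fun_prop),
    ← withDensity_smul _ (by fun_prop), ← withDensity_add_left (by fun_prop)]
  congr 1
  ext x
  have : (2 : ℝ≥0∞)⁻¹ = ENNReal.ofReal (1 / 2) := by
    rw [one_div, ENNReal.ofReal_inv_of_pos (by norm_num)]; simp
  simp only [Pi.add_apply, Pi.smul_apply, smul_eq_mul, this, neg_dotProduct, dotProduct_neg, neg_neg]
  rw [← ENNReal.ofReal_mul (by positivity), ← ENNReal.ofReal_mul (by positivity),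
    ← ENNReal.ofReal_add (by positivity) (by positivity)]
  congr 1
  rw [Real.cosh_eq, sub_eq_add_neg, sub_eq_add_neg, Real.exp_add, Real.exp_add, neg_div]
  ring

/-- general unlabeled domination from a pointwise bound -/
lemma unlabeled_dom {p : ℕ} (s : ℝ) (hs : 0 ≤ s) (c e : Fin p → ℝ) (hce : c ⬝ᵥ e = 0)
    (G : (Fin p → ℝ) → ℝ) (v : ℝ) (hG : HI (gaussPi (0 : Fin p → ℝ)) G v)
    (hb : ∀ x, Real.cosh (c ⬝ᵥ x) * (Real.exp (-(e ⬝ᵥ e) / 2) * Real.cosh (c ⬝ᵥ x + e ⬝ᵥ x)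
      / Real.cosh (c ⬝ᵥ x)) ^ (1 + s) ≤ G x) :
    Dom s (unlabeledLaw (c + e)) (unlabeledLaw c)
      (ENNReal.ofReal (Real.exp (-(c ⬝ᵥ c) / 2) * v)) := by
  have h1 := meas_dot c
  have h2 := meas_dot e
  have hp : ∀ y, 0 < Real.cosh y := Real.cosh_pos
  have hm : Measurable (fun x : Fin p → ℝ => ENNReal.ofReal (Real.exp (-(e ⬝ᵥ e) / 2) *
      Real.cosh (c ⬝ᵥ x + e ⬝ᵥ x) / Real.cosh (c ⬝ᵥ x))) := by fun_prop
  refine ⟨_, hm, ?_, ?_⟩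
  · rw [unlabeled_wd c, ← withDensity_mul _ (by fun_prop) hm, unlabeled_wd]
    congr 1
    ext x
    simp only [Pi.mul_apply]
    have := hp (c ⬝ᵥ x)
    rw [← ENNReal.ofReal_mul (by positivity)]
    congr 1
    simp only [add_dotProduct, dotProduct_add, dotProduct_comm e c, hce]
    have e3 : -(c ⬝ᵥ c + 0 + (0 + e ⬝ᵥ e)) / 2 = -(c ⬝ᵥ c) / 2 + -(e ⬝ᵥ e) / 2 := by ring
    rw [e3, Real.exp_add]
    field_simp
  · rw [unlabeled_wd c, lintegral_withDensity_eq_lintegral_mul _ (by fun_prop) (hm.pow_const _)]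
    have := (hG.cmul (Real.exp (-(c ⬝ᵥ c) / 2))).lint (fun x => by
      have := hp (c ⬝ᵥ x)
      have := hp (c ⬝ᵥ x + e ⬝ᵥ x)
      refine mul_nonneg (by positivity) (le_trans (by positivity) (hb x)))
    rw [← this]
    refine lintegral_mono fun x => ?_
    simp only [Pi.mul_apply]
    have := hp (c ⬝ᵥ x)
    have := hp (c ⬝ᵥ x + e ⬝ᵥ x)
    rw [ENNReal.ofReal_rpow_of_nonneg (by positivity) (by linarith),
      ← ENNReal.ofReal_mul (by positivity), mul_assoc]
    apply ENNReal.ofReal_le_ofReal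
    exact mul_le_mul_of_nonneg_left (hb x) (by positivity)

lemma taylor_bd (s η x : ℝ) (hs : 0 < s) (hs1 : s ≤ 1) (hη : 0 < η) (hη1 : η < 1) (hx : -1 ≤ x) :
    (1 + x) ^ (1 + s) ≤ 1 + (1 + s) * x + s * (1 + s) / (2 * (1 - η)) * x ^ 2
      + s / η ^ 2 * x ^ 4 := by
  have hη' : 0 < 1 - η := by linarith
  rcases lt_or_ge x (-η) with h | h
  · have h1 : (1 + x) ^ s ≤ 1 + s * x := rpow_one_add_le_one_add_mul_self hx hs.le hs1
    have h2 : (1 + x) ^ (1 + s) = (1 + x) * (1 + x) ^ s := by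
      rw [Real.rpow_add_of_nonneg (by linarith) zero_le_one hs.le, Real.rpow_one]
    have h3 : (1 + x) * (1 + x) ^ s ≤ (1 + x) * (1 + s * x) :=
      mul_le_mul_of_nonneg_left h1 (by linarith)
    have h4 : η ^ 2 ≤ x ^ 2 := by nlinarith
    have h5 : s * x ^ 2 ≤ s / η ^ 2 * x ^ 4 := by
      rw [div_mul_eq_mul_div, le_div_iff₀ (by positivity)]
      have : s * x ^ 2 * η ^ 2 ≤ s * x ^ 2 * x ^ 2 := by gcongr
      nlinarith
    have h6 : 0 ≤ s * (1 + s) / (2 * (1 - η)) * x ^ 2 := by positivity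
    rw [h2]; nlinarith
  · set A := s * (1 + s) / (2 * (1 - η)) with hA
    have h6 : 0 ≤ s / η ^ 2 * x ^ 4 := by positivity
    let f : ℝ → ℝ := fun x => 1 + (1 + s) * x + A * x ^ 2 - (1 + x) ^ (1 + s)
    have hd : ∀ y, -1 < y → HasDerivAt f ((1 + s) + 2 * A * y - (1 + s) * (1 + y) ^ s) y := by
      intro y hy
      have k1 : HasDerivAt (fun x : ℝ => (1 + x) ^ (1 + s)) (1 * (1 + s) * (1 + y) ^ (1 + s - 1)) y :=
        ((hasDerivAt_id y).const_add 1).rpow_const (Or.inl (by simp; linarith))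
      have k2 : HasDerivAt (fun x : ℝ => 1 + (1 + s) * x + A * x ^ 2) ((1 + s) * 1 + A * (2 * y)) y := by
        have := (((hasDerivAt_id y).const_mul (1 + s)).const_add 1).fun_add
          ((hasDerivAt_pow 2 y).const_mul A)
        simpa using this
      refine (k2.fun_sub k1).congr_deriv ?_
      rw [show 1 + s - 1 = s by ring]; ring
    have hfc : ContinuousOn f (Set.Ici (-η)) := fun y hy =>
      (hd y (by have := Set.mem_Ici.1 hy; linarith)).continuousAt.continuousWithinAt
    have h0 : f 0 = 0 := by simp [f]
    have hfx : 0 ≤ f x := by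
      rw [← h0]
      rcases le_total 0 x with hx0 | hx0
      · have : MonotoneOn f (Set.Ici 0) := by
          refine monotoneOn_of_deriv_nonneg (convex_Ici 0) (hfc.mono (Set.Ici_subset_Ici.2 (by linarith)))
            ?_ ?_
          · intro y hy
            rw [interior_Ici] at hy
            have := Set.mem_Ioi.1 hy
            exact (hd y (by linarith)).differentiableAt.differentiableWithinAt
          · intro y hy
            rw [interior_Ici] at hy
            have hy := Set.mem_Ioi.1 hy
            rw [(hd y (by linarith)).deriv]
            have h1 : (1 + y) ^ s ≤ 1 + s * y :=
              rpow_one_add_le_one_add_mul_self (by linarith) hs.le hs1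
            have h2 : s * (1 + s) ≤ 2 * A := by
              rw [hA, show 2 * (s * (1 + s) / (2 * (1 - η))) = s * (1 + s) / (1 - η) by field_simp,
                le_div_iff₀ hη']
              have : 0 < s * (1 + s) := by positivity
              nlinarith
            have h3 := mul_le_mul_of_nonneg_left h1 (by linarith : 0 ≤ 1 + s)
            have h4 := mul_le_mul_of_nonneg_right h2 hy.le
            nlinarith
        exact this (Set.mem_Ici.2 le_rfl) (Set.mem_Ici.2 hx0) hx0
      · have : AntitoneOn f (Set.Icc (-η) 0) := by
          refine antitoneOn_of_deriv_nonpos (convex_Icc _ _) (hfc.mono Set.Icc_subset_Ici_self)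
            ?_ ?_
          · intro y hy
            rw [interior_Icc] at hy
            have := hy.1
            exact (hd y (by linarith)).differentiableAt.differentiableWithinAt
          · intro y hy
            rw [interior_Icc] at hy
            obtain ⟨hy1, hy2⟩ := hy
            rw [(hd y (by linarith)).deriv]
            have hy3 : 0 < 1 + y := by linarith
            have h1 : (1 + -y / (1 + y)) ^ s ≤ 1 + s * (-y / (1 + y)) :=
              rpow_one_add_le_one_add_mul_self (by
                have : 0 ≤ -y / (1 + y) := by apply div_nonneg <;> linarith
                linarith) hs.le hs1
            have e1 : 1 + -y / (1 + y) = (1 + y)⁻¹ := by field_simp; ring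
            rw [e1, Real.inv_rpow hy3.le] at h1
            have hw : -y / (1 + y) ≤ -y / (1 - η) :=
              div_le_div_of_nonneg_left (by linarith) hη' (by linarith)
            set w := -y / (1 - η) with hwd
            have hw0 : 0 ≤ w := by apply div_nonneg <;> linarith
            have hr : 0 < (1 + y) ^ s := Real.rpow_pos_of_pos hy3 s
            have h2 : ((1 + y) ^ s)⁻¹ ≤ 1 + s * w := by nlinarith
            have h3 : 1 ≤ (1 + s * w) * (1 + y) ^ s := by
              have := mul_le_mul_of_nonneg_right h2 hr.le
              rwa [inv_mul_cancel₀ hr.ne'] at this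
            have h4 : 1 - s * w ≤ (1 + y) ^ s := by
              have h5 : 0 < 1 + s * w := by positivity
              have h6 : (1 + s * w) * (1 - s * w) ≤ (1 + s * w) * (1 + y) ^ s := by nlinarith [sq_nonneg (s * w)]
              exact le_of_mul_le_mul_left h6 h5
            have h5 : 2 * A * y = -((1 + s) * (s * w)) := by
              rw [hA, hwd]; field_simp
            rw [h5]
            have := mul_le_mul_of_nonneg_left h4 (by linarith : 0 ≤ 1 + s)
            nlinarith
        exact this (Set.mem_Icc.2 ⟨h, hx0⟩) (Set.mem_Icc.2 ⟨by linarith, le_rfl⟩) hx0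
    simp only [f] at hfx
    linarith

lemma r_split (y z t : ℝ) : Real.exp (-t / 2) * Real.cosh (y + z) / Real.cosh y
    = (Real.exp y / (2 * Real.cosh y)) * Real.exp (z - t / 2)
      + (Real.exp (-y) / (2 * Real.cosh y)) * Real.exp (-z - t / 2) := by
  have := Real.cosh_pos y
  rw [Real.cosh_eq (y + z), neg_add, Real.exp_add, Real.exp_add, sub_eq_add_neg, sub_eq_add_neg,
    Real.exp_add, Real.exp_add, neg_div]
  field_simp

lemma w_sum (y : ℝ) : Real.exp y / (2 * Real.cosh y) + Real.exp (-y) / (2 * Real.cosh y) = 1 := by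
  have h := Real.cosh_pos y
  have := Real.cosh_eq y
  rw [← add_div, div_eq_one_iff_eq (by positivity)]
  linarith

lemma bd1 (s y z t : ℝ) (hs : 0 ≤ s) :
    Real.cosh y * (Real.exp (-t / 2) * Real.cosh (y + z) / Real.cosh y) ^ (1 + s)
      ≤ Real.exp (-((1 + s) * t / 2)) * Real.cosh (y + (1 + s) * z) := by
  have h := Real.cosh_pos y
  have hc := (convexOn_rpow (by linarith : 1 ≤ 1 + s)).2
    (Set.mem_Ici.2 (Real.exp_pos (z - t / 2)).le) (Set.mem_Ici.2 (Real.exp_pos (-z - t / 2)).le)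
    (by positivity : 0 ≤ Real.exp y / (2 * Real.cosh y))
    (by positivity : 0 ≤ Real.exp (-y) / (2 * Real.cosh y)) (w_sum y)
  simp only [smul_eq_mul] at hc
  rw [← r_split, ← Real.exp_mul, ← Real.exp_mul] at hc
  refine (mul_le_mul_of_nonneg_left hc h.le).trans (le_of_eq ?_)
  have e1 : Real.exp ((z - t / 2) * (1 + s)) = Real.exp (-((1 + s) * t / 2)) * Real.exp ((1 + s) * z) := by
    rw [← Real.exp_add]; congr 1; ring
  have e2 : Real.exp ((-z - t / 2) * (1 + s)) = Real.exp (-((1 + s) * t / 2)) * Real.exp (-((1 + s) * z)) := by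
    rw [← Real.exp_add]; congr 1; ring
  rw [e1, e2, Real.cosh_eq (y + _), neg_add, Real.exp_add, Real.exp_add]
  field_simp

lemma bd4 (y z t : ℝ) :
    Real.cosh y * (Real.exp (-t / 2) * Real.cosh (y + z) / Real.cosh y - 1) ^ 4
      ≤ Real.cosh y + -4 * Real.exp (-t / 2) * Real.cosh (y + z)
        + 6 * Real.exp (-t) * Real.cosh (y + 2 * z)
        + -4 * Real.exp (-(3 * t / 2)) * Real.cosh (y + 3 * z)
        + Real.exp (-(2 * t)) * Real.cosh (y + 4 * z) := by
  have h := Real.cosh_pos y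
  have hc := (Even.convexOn_pow (𝕜 := ℝ) (n := 4) (by decide)).2
    (Set.mem_univ (Real.exp (z - t / 2) - 1)) (Set.mem_univ (Real.exp (-z - t / 2) - 1))
    (by positivity : 0 ≤ Real.exp y / (2 * Real.cosh y))
    (by positivity : 0 ≤ Real.exp (-y) / (2 * Real.cosh y)) (w_sum y)
  simp only [smul_eq_mul] at hc
  have e0 : Real.exp y / (2 * Real.cosh y) * (Real.exp (z - t / 2) - 1)
      + Real.exp (-y) / (2 * Real.cosh y) * (Real.exp (-z - t / 2) - 1)
      = Real.exp (-t / 2) * Real.cosh (y + z) / Real.cosh y - 1 := by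
    have := w_sum y
    rw [r_split]; linear_combination -this
  rw [e0] at hc
  refine (mul_le_mul_of_nonneg_left hc h.le).trans (le_of_eq ?_)
  have hexp : ∀ (n : ℕ) (u : ℝ), Real.exp (n * u) = Real.exp u ^ n := fun n u => by
    rw [Real.exp_nat_mul]
  have e1 : Real.exp (-t) = Real.exp (-t / 2) ^ 2 := by rw [← hexp]; congr 1; push_cast; ring
  have e2 : Real.exp (-(3 * t / 2)) = Real.exp (-t / 2) ^ 3 := by rw [← hexp]; congr 1; push_cast; ring
  have e3 : Real.exp (-(2 * t)) = Real.exp (-t / 2) ^ 4 := by rw [← hexp]; congr 1; push_cast; ring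
  have c1 : Real.cosh (y + z) = (Real.exp y * Real.exp z + Real.exp (-y) * Real.exp (-z)) / 2 := by
    rw [Real.cosh_eq, neg_add, Real.exp_add, Real.exp_add]
  have c2 : Real.cosh (y + 2 * z) = (Real.exp y * Real.exp z ^ 2 + Real.exp (-y) * Real.exp (-z) ^ 2) / 2 := by
    rw [Real.cosh_eq, neg_add, Real.exp_add, Real.exp_add, ← hexp, ← hexp]; push_cast; ring_nf
  have c3 : Real.cosh (y + 3 * z) = (Real.exp y * Real.exp z ^ 3 + Real.exp (-y) * Real.exp (-z) ^ 3) / 2 := by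
    rw [Real.cosh_eq, neg_add, Real.exp_add, Real.exp_add, ← hexp, ← hexp]; push_cast; ring_nf
  have c4 : Real.cosh (y + 4 * z) = (Real.exp y * Real.exp z ^ 4 + Real.exp (-y) * Real.exp (-z) ^ 4) / 2 := by
    rw [Real.cosh_eq, neg_add, Real.exp_add, Real.exp_add, ← hexp, ← hexp]; push_cast; ring_nf
  have d1 : Real.exp (z - t / 2) = Real.exp z * Real.exp (-t / 2) := by
    rw [← Real.exp_add]; congr 1; ring
  have d2 : Real.exp (-z - t / 2) = Real.exp (-z) * Real.exp (-t / 2) := by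
    rw [← Real.exp_add]; congr 1; ring
  rw [e1, e2, e3, c1, c2, c3, c4, d1, d2]
  have hy : Real.exp y / (2 * Real.cosh y) * Real.cosh y = Real.exp y / 2 := by field_simp
  have hy' : Real.exp (-y) / (2 * Real.cosh y) * Real.cosh y = Real.exp (-y) / 2 := by field_simp
  have hcy := Real.cosh_eq y
  rw [mul_add, mul_comm (Real.cosh y), mul_comm (Real.cosh y), mul_right_comm, hy, mul_right_comm, hy', hcy]
  ring

lemma bd2 (y z t : ℝ) :
    Real.cosh y * (Real.exp (-t / 2) * Real.cosh (y + z) / Real.cosh y - 1) ^ 2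
      ≤ Real.exp (-t) * (-(1/2) * Real.cosh y + 5/4 * Real.cosh (y + 2 * z)
        + 1/4 * Real.cosh (y + -2 * z) + -1 * Real.cosh (2 * z) + 1)
        + -2 * Real.exp (-t / 2) * Real.cosh (y + z) + Real.cosh y := by
  have h := Real.cosh_pos y
  have e1 : Real.exp (-t) = Real.exp (-t / 2) ^ 2 := by
    rw [← Real.exp_nat_mul]; congr 1; push_cast; ring
  have hs := Real.cosh_sq y
  have hz := Real.cosh_sq z
  have key : Real.cosh (y + z) ^ 2 / Real.cosh y ≤
      -(1/2) * Real.cosh y + 5/4 * Real.cosh (y + 2 * z)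
        + 1/4 * Real.cosh (y + -2 * z) + -1 * Real.cosh (2 * z) + 1 := by
    rw [neg_mul 2 z, Real.cosh_add y z, Real.cosh_add y (2 * z), Real.cosh_add y (-(2 * z)), Real.cosh_neg,
      Real.sinh_neg, Real.cosh_two_mul, Real.sinh_two_mul, hz, div_le_iff₀ h]
    set C := Real.cosh y
    set S := Real.sinh y
    set c := Real.cosh z
    set v := Real.sinh z
    have hS : S ^ 2 = C ^ 2 - 1 := by linarith
    have hc : c ^ 2 = v ^ 2 + 1 := by linarith
    have : 0 ≤ v ^ 2 * (C - 1) ^ 2 := by positivity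
    have ex : (C * c + S * v) ^ 2 = C ^ 2 * (v ^ 2 + 1) + 2 * C * S * c * v + (C ^ 2 - 1) * v ^ 2 := by
      rw [← hS, ← hc]; ring
    rw [ex]
    nlinarith
  have : Real.cosh y * (Real.exp (-t / 2) * Real.cosh (y + z) / Real.cosh y - 1) ^ 2
      = Real.exp (-t / 2) ^ 2 * (Real.cosh (y + z) ^ 2 / Real.cosh y)
        + -2 * Real.exp (-t / 2) * Real.cosh (y + z) + Real.cosh y := by
    field_simp; ring
  rw [this, e1]
  gcongr

lemma unl_dom1 {p : ℕ} (s : ℝ) (hs : 0 ≤ s) (c e : Fin p → ℝ) (hce : c ⬝ᵥ e = 0) :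
    Dom s (unlabeledLaw (c + e)) (unlabeledLaw c)
      (ENNReal.ofReal (Real.exp (s * (1 + s) * (e ⬝ᵥ e) / 2))) := by
  have h := unlabeled_dom s hs c e hce _ _
    ((HI_cosh (c + (1 + s) • e)).cmul (Real.exp (-((1 + s) * (e ⬝ᵥ e) / 2)))) (fun x => by
      have := bd1 s (c ⬝ᵥ x) (e ⬝ᵥ x) (e ⬝ᵥ e) hs
      simpa only [add_dotProduct, smul_dotProduct, smul_eq_mul] using this)
  convert h using 2
  rw [← Real.exp_add, ← Real.exp_add]
  congr 1
  simp only [add_dotProduct, dotProduct_add, smul_dotProduct, dotProduct_smul, smul_eq_mul,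
    dotProduct_comm e c, hce]
  ring

lemma HI_cosh' {p : ℕ} (c e : Fin p → ℝ) (hce : c ⬝ᵥ e = 0) (a : ℝ) :
    HI (gaussPi (0 : Fin p → ℝ)) (fun x => Real.cosh (c ⬝ᵥ x + a * (e ⬝ᵥ x)))
      (Real.exp (c ⬝ᵥ c / 2) * Real.exp (a ^ 2 * (e ⬝ᵥ e) / 2)) := by
  have h := HI_cosh (c + a • e)
  simp only [add_dotProduct, dotProduct_add, smul_dotProduct, dotProduct_smul, smul_eq_mul,
    dotProduct_comm e c, hce] at h
  convert h using 1
  rw [← Real.exp_add]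
  congr 1; ring

lemma unl_dom2 {p : ℕ} (s η : ℝ) (hs : 0 < s) (hs1 : s ≤ 1) (hη : 0 < η) (hη1 : η < 1)
    (c e : Fin p → ℝ) (hce : c ⬝ᵥ e = 0) (t lam : ℝ) (ht : e ⬝ᵥ e = t) (ht0 : 0 ≤ t)
    (hl : c ⬝ᵥ c ≤ lam) :
    Dom s (unlabeledLaw (c + e)) (unlabeledLaw c)
      (ENNReal.ofReal (Real.exp (
        s * (1 + s) / (2 * (1 - η)) * (Real.cosh t - 1 + lam * Real.sinh t)
        + s / η ^ 2 * (1 - 4 + 6 * Real.exp t - 4 * Real.exp (3 * t) + Real.exp (6 * t))))) := by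
  have hη' : 0 < 1 - η := by linarith
  set A := s * (1 + s) / (2 * (1 - η)) with hA
  set D := s / η ^ 2 with hD
  have hA0 : 0 ≤ A := by positivity
  have hD0 : 0 ≤ D := by positivity
  set m := c ⬝ᵥ c with hm
  have I0 : HI (gaussPi (0 : Fin p → ℝ)) (fun x => Real.cosh (c ⬝ᵥ x)) (Real.exp (m / 2)) := HI_cosh c
  have I1 := HI_cosh' c e hce 1
  have I2 := HI_cosh' c e hce 2
  have I2' := HI_cosh' c e hce (-2)
  have I3 := HI_cosh' c e hce 3
  have I4 := HI_cosh' c e hce 4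
  have J := HI_cosh' (0 : Fin p → ℝ) e (by simp) 2
  have Jc : HI (gaussPi (0 : Fin p → ℝ)) (fun _ => (1 : ℝ)) 1 := ⟨integrable_const _, by simp⟩
  simp only [one_mul, zero_dotProduct, zero_add, zero_div, Real.exp_zero, ht, ← hm] at I1 I2 I2' I3 I4 J
  have T1 := (I0.add ((I1.cmul (Real.exp (-t/2))).add (I0.cmul (-1)) |>.cmul (1 + s)))
  have T2 := (((((((I0.cmul (-(1/2))).add (I2.cmul (5/4))).add (I2'.cmul (1/4))).add
    (J.cmul (-1))).add Jc).cmul (Real.exp (-t))).add (I1.cmul (-2 * Real.exp (-t / 2)))).add I0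
  have T4 := (((I0.add (I1.cmul (-4 * Real.exp (-t/2)))).add (I2.cmul (6 * Real.exp (-t)))).add
    (I3.cmul (-4 * Real.exp (-(3 * t / 2))))).add (I4.cmul (Real.exp (-(2 * t))))
  have h := unlabeled_dom s hs.le c e hce _ _ ((T1.add (T2.cmul A)).add (T4.cmul D)) (fun x => by
    rw [ht]
    have hy := Real.cosh_pos (c ⬝ᵥ x)
    have hyz := Real.cosh_pos (c ⬝ᵥ x + e ⬝ᵥ x)
    have b2 := mul_le_mul_of_nonneg_left (bd2 (c ⬝ᵥ x) (e ⬝ᵥ x) t) hA0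
    have b4 := mul_le_mul_of_nonneg_left (bd4 (c ⬝ᵥ x) (e ⬝ᵥ x) t) hD0
    set r := Real.exp (-t / 2) * Real.cosh (c ⬝ᵥ x + e ⬝ᵥ x) / Real.cosh (c ⬝ᵥ x) with hr
    have hr0 : 0 ≤ r := by positivity
    have b := taylor_bd s η (r - 1) hs hs1 hη hη1 (by linarith)
    rw [add_sub_cancel] at b
    have b' := mul_le_mul_of_nonneg_left b hy.le
    have hrc : Real.cosh (c ⬝ᵥ x) * r = Real.exp (-t / 2) * Real.cosh (c ⬝ᵥ x + e ⬝ᵥ x) := by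
      rw [hr]; field_simp
    refine b'.trans ?_
    refine le_trans (le_of_eq ?_) (add_le_add (add_le_add le_rfl b2) b4)
    rw [← hrc, hA, hD]; ring)
  obtain ⟨R, h1, h2, h3⟩ := h
  refine ⟨R, h1, h2, h3.trans (ENNReal.ofReal_le_ofReal ?_)⟩
  refine le_trans ?_ (Real.add_one_le_exp _)
  have hmm : Real.exp (-m / 2) * Real.exp (m / 2) = 1 := by
    rw [← Real.exp_add]; ring_nf; simp
  have hlow : 1 - m / 2 ≤ Real.exp (-m / 2) := by
    have := Real.add_one_le_exp (-m / 2); linarith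
  have hsinh : 0 ≤ Real.sinh t := Real.sinh_nonneg_iff.2 ht0
  have g1 : Real.exp (-t / 2) * Real.exp (1 ^ 2 * t / 2) = 1 := by
    rw [← Real.exp_add]; ring_nf; simp
  have g2 : Real.exp (-t) * Real.exp (2 ^ 2 * t / 2) = Real.exp t := by
    rw [← Real.exp_add]; ring_nf
  have g2' : Real.exp (-t) * Real.exp ((-2) ^ 2 * t / 2) = Real.exp t := by
    rw [← Real.exp_add]; ring_nf
  have g3 : Real.exp (-(3 * t / 2)) * Real.exp (3 ^ 2 * t / 2) = Real.exp (3 * t) := by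
    rw [← Real.exp_add]; ring_nf
  have g4 : Real.exp (-(2 * t)) * Real.exp (4 ^ 2 * t / 2) = Real.exp (6 * t) := by
    rw [← Real.exp_add]; ring_nf
  have hX2 : Real.cosh t - 1 + (2 - 2 * Real.exp (-m / 2)) * Real.sinh t
      ≤ Real.cosh t - 1 + lam * Real.sinh t := by
    have : (2 - 2 * Real.exp (-m / 2)) * Real.sinh t ≤ lam * Real.sinh t :=
      mul_le_mul_of_nonneg_right (by linarith) hsinh
    linarith
  have hX2' := mul_le_mul_of_nonneg_left hX2 hA0
  refine le_trans (le_of_eq ?_) (add_le_add (add_le_add hX2' le_rfl) le_rfl)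
  rw [Real.cosh_eq, Real.sinh_eq]
  set M := Real.exp (-m / 2)
  set N := Real.exp (m / 2)
  set E1 := Real.exp (1 ^ 2 * t / 2)
  set E2 := Real.exp (2 ^ 2 * t / 2)
  set E2' := Real.exp ((-2) ^ 2 * t / 2)
  set E3 := Real.exp (3 ^ 2 * t / 2)
  set E4 := Real.exp (4 ^ 2 * t / 2)
  set F1 := Real.exp (-t / 2)
  set F2 := Real.exp (-t)
  set F3 := Real.exp (-(3 * t / 2))
  set F4 := Real.exp (-(2 * t))
  have : M * (N + (1 + s) * (F1 * (N * E1) + -1 * N) +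
      A * (F2 * (-(1 / 2) * N + 5 / 4 * (N * E2) + 1 / 4 * (N * E2') + -1 * E2 + 1) +
        -2 * F1 * (N * E1) + N) +
      D * (N + -4 * F1 * (N * E1) + 6 * F2 * (N * E2) + -4 * F3 * (N * E3) + F4 * (N * E4)))
    = (M * N) * (1 + (1 + s) * (F1 * E1 - 1) + A * (-(1/2) * F2 + 5/4 * (F2 * E2) + 1/4 * (F2 * E2')
        - 2 * (F1 * E1) + 1) + D * (1 - 4 * (F1 * E1) + 6 * (F2 * E2) - 4 * (F3 * E3) + F4 * E4))
      + A * M * (F2 - F2 * E2) := by ring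
  rw [this, hmm, g1, g2, g2', g3, g4]
  ring

lemma exists_s (κ lam : ℝ) (hκ : 1 < κ) (hlam : 0 < lam) :
    ∃ s : ℝ, 0 < s ∧ s ≤ 1 ∧ 1 + s ≤ κ ∧ ∀ᶠ t in nhdsWithin (0 : ℝ) (Set.Ioi 0),
      ∀ (p : ℕ) (c e : Fin p → ℝ), c ⬝ᵥ e = 0 → e ⬝ᵥ e = t → c ⬝ᵥ c ≤ lam →
        Dom s (unlabeledLaw (c + e)) (unlabeledLaw c)
          (ENNReal.ofReal (Real.exp (s * κ * t / 2 * min 1 lam))) := by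
  set s := min 1 ((κ - 1) / 2) with hs
  have hs0 : 0 < s := lt_min one_pos (by linarith)
  have hs1 : s ≤ 1 := min_le_left _ _
  have hs2 : s ≤ (κ - 1) / 2 := min_le_right _ _
  refine ⟨s, hs0, hs1, by linarith, ?_⟩
  set η := (κ - 1) / (4 * κ) with hη
  have hη0 : 0 < η := div_pos (by linarith) (by linarith)
  have hη1 : η < 1 := by rw [hη, div_lt_one (by linarith)]; linarith
  have hη' : 0 < 1 - η := by linarith
  set G : ℝ → ℝ := fun t => s * (1 + s) / (2 * (1 - η)) * (Real.cosh t - 1 + lam * Real.sinh t)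
        + s / η ^ 2 * (1 - 4 + 6 * Real.exp t - 4 * Real.exp (3 * t) + Real.exp (6 * t)) with hG
  have hd : HasDerivAt G (s * (1 + s) / (2 * (1 - η)) * lam) 0 := by
    have a1 := ((Real.hasDerivAt_cosh 0).sub_const 1).fun_add ((Real.hasDerivAt_sinh 0).const_mul lam)
    have x3 : HasDerivAt (fun t : ℝ => Real.exp (3 * t)) (Real.exp (3 * 0) * (3 * 1)) 0 :=
      ((hasDerivAt_id (0 : ℝ)).const_mul 3).exp
    have x6 : HasDerivAt (fun t : ℝ => Real.exp (6 * t)) (Real.exp (6 * 0) * (6 * 1)) 0 :=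
      ((hasDerivAt_id (0 : ℝ)).const_mul 6).exp
    have a2 := ((((Real.hasDerivAt_exp 0).const_mul 6).const_add (1 - 4 : ℝ)).fun_sub
      (x3.const_mul 4)).fun_add x6
    refine ((a1.const_mul (s * (1 + s) / (2 * (1 - η)))).fun_add (a2.const_mul (s / η ^ 2))).congr_deriv ?_
    simp
    right
    norm_num
  have hlt : s * (1 + s) / (2 * (1 - η)) * lam < s * κ / 2 * lam := by
    apply mul_lt_mul_of_pos_right _ hlam
    rw [div_lt_iff₀ (by positivity)]
    have e1 : 1 - η = (3 * κ + 1) / (4 * κ) := by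
      rw [hη]; field_simp; ring
    rw [e1]
    have e2 : s * κ / 2 * (2 * ((3 * κ + 1) / (4 * κ))) = s * ((3 * κ + 1) / 4) := by
      field_simp
    rw [e2]
    apply mul_lt_mul_of_pos_left _ hs0
    linarith
  have hG0 : G 0 = 0 := by simp [hG]; right; norm_num
  have hev := hd.tendsto_slope_zero_right.eventually (gt_mem_nhds hlt)
  filter_upwards [hev, self_mem_nhdsWithin] with t h1 h2 p c e hce het hcl
  have ht : 0 < t := h2
  rw [zero_add, hG0, sub_zero, smul_eq_mul, inv_mul_lt_iff₀ ht] at h1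
  rcases le_total 1 lam with hl | hl
  · rw [min_eq_left hl]
    obtain ⟨R, r1, r2, r3⟩ := unl_dom1 s hs0.le c e hce
    refine ⟨R, r1, r2, r3.trans (ENNReal.ofReal_le_ofReal (Real.exp_le_exp.2 ?_))⟩
    rw [het]
    have : s * (1 + s) ≤ s * κ := by gcongr; linarith
    have := mul_le_mul_of_nonneg_right this ht.le
    linarith
  · rw [min_eq_right hl]
    obtain ⟨R, r1, r2, r3⟩ := unl_dom2 s η hs0 hs1 hη0 hη1 c e hce t lam het ht.le hcl
    refine ⟨R, r1, r2, r3.trans (ENNReal.ofReal_le_ofReal (Real.exp_le_exp.2 ?_))⟩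
    change G t ≤ _
    linarith

lemma inst_bound (δ lam q s κ : ℝ) (hδ : δ ∈ Set.Ioo (0 : ℝ) 1) (hlam : 0 < lam)
    (hq : q ∈ Set.Icc (0 : ℝ) 1) (hs : 0 < s) (hsκ : 1 + s ≤ κ) (hκ : κ * (1 - δ) = 1 - δ / 2)
    (p k L₀ n₀ L n : ℕ) (hL : (L : ℝ) ≤ q * L₀) (hn : (n : ℝ) ≤ (1 - q) * n₀) (hk : 1 ≤ k) (hkp : k ≤ p)
    (hL₀bound : (L₀ : ℝ) < 2 * (1 - δ) * (k : ℝ) / lam * Real.log ((p : ℝ) - (k : ℝ) + 1))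
    (hn₀bound : (n₀ : ℝ) <
      2 * (1 - δ) * (k : ℝ) / lam ^ 2 * Real.log ((p : ℝ) - (k : ℝ) + 1) * max 1 lam)
    (hdom : ∀ (p : ℕ) (c e : Fin p → ℝ), c ⬝ᵥ e = 0 → e ⬝ᵥ e = lam / k → c ⬝ᵥ c ≤ lam →
        Dom s (unlabeledLaw (c + e)) (unlabeledLaw c)
          (ENNReal.ofReal (Real.exp (s * κ * (lam / k) / 2 * min 1 lam))))
    (est : (Fin L → (Fin p → ℝ) × ℝ) →
      (Fin n → (Fin p → ℝ)) → Finset (Fin p)) :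
    ∃ S ∈ Finset.univ.powersetCard k,
      1 - (((p : ℝ) - k + 1) ^ (-(δ / 4)) + ((p : ℝ) - k + 1) ^ (-(s * δ / 4))) ≤
        (((Measure.pi fun _ : Fin L => labeledLaw (muVec p k lam S)).prod
            (Measure.pi fun _ : Fin n =>
              unlabeledLaw (muVec p k lam S)))
          {d | est d.1 d.2 ≠ S}).toReal := by
  obtain ⟨hδ0, hδ1⟩ := hδ
  obtain ⟨hq0, hq1⟩ := hq
  have hk0 : (0 : ℝ) < k := by exact_mod_cast hk
  set t := lam / k with ht
  have ht0 : 0 < t := by positivity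
  obtain ⟨S0, -, hS0⟩ := Finset.exists_subset_card_eq (s := (Finset.univ : Finset (Fin p))) (n := k - 1)
    (by simp; omega)
  set M : ℝ := (p : ℝ) - k + 1 with hM
  have hM1 : 1 ≤ M := by
    have : (k : ℝ) ≤ p := by exact_mod_cast hkp
    linarith
  have hM0 : 0 < M := by linarith
  have hcard : (S0ᶜ.card : ℝ) = M := by
    rw [Finset.card_compl, hS0, Fintype.card_fin, Nat.cast_sub (by omega), Nat.cast_sub hk]
    push_cast; ring
  have hne : (S0ᶜ : Finset (Fin p)).Nonempty := by
    rw [← Finset.card_pos]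
    have : (0 : ℝ) < (S0ᶜ.card : ℝ) := by rw [hcard]; exact hM0
    exact_mod_cast this
  set c := muVec p k lam S0 with hc
  set e : Fin p → (Fin p → ℝ) := fun j => Pi.single j (Real.sqrt t) with he
  have hce : ∀ j ∈ S0ᶜ, c ⬝ᵥ e j = 0 := by
    intro j hj
    have : j ∉ S0 := by simpa using hj
    simp [he, hc, muVec, this]
  have hee : ∀ j, e j ⬝ᵥ e j = t := by
    intro j
    simp [he, Real.mul_self_sqrt ht0.le]
  have hcc : c ⬝ᵥ c ≤ lam := by
    have : c ⬝ᵥ c = (S0.card : ℝ) * t := by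
      simp only [dotProduct, hc, muVec, mul_ite, ite_mul, zero_mul, mul_zero]
      rw [← Finset.sum_filter]
      simp [← ht, Real.mul_self_sqrt ht0.le]
    rw [this, hS0, ht, mul_div_assoc', div_le_iff₀ hk0, mul_comm]
    gcongr
    omega
  have hmu : ∀ j ∈ S0ᶜ, muVec p k lam (insert j S0) = c + e j := by
    intro j hj
    have hj : j ∉ S0 := by simpa using hj
    ext i
    by_cases hij : i = j
    · subst hij; simp [hc, he, muVec, hj, ht]
    · simp [hc, he, muVec, hij]
  have hlog : 0 ≤ Real.log M := Real.log_nonneg hM1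
  set B := Real.exp (s * (1 + s) * t / 2) ^ L * Real.exp (s * κ * t / 2 * min 1 lam) ^ n with hB
  have hBle : B ≤ M ^ (s * (1 - δ / 2)) := by
    rw [hB, ← Real.exp_nat_mul, ← Real.exp_nat_mul, ← Real.exp_add, Real.rpow_def_of_pos hM0]
    apply Real.exp_le_exp.2
    have hL' : (L : ℝ) * (t / 2) ≤ q * ((1 - δ) * Real.log M) := by
      calc (L : ℝ) * (t / 2) ≤ (q * (2 * (1 - δ) * (k : ℝ) / lam * Real.log M)) * (t / 2) := by
            gcongr
            exact hL.trans (by gcongr)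
        _ = _ := by rw [ht]; field_simp
    have hn' : (n : ℝ) * (t / 2 * min 1 lam) ≤ (1 - q) * ((1 - δ) * Real.log M) := by
      have hmm : max 1 lam * min 1 lam = lam := by rw [max_mul_min, one_mul]
      have hmin : 0 ≤ min 1 lam := le_min zero_le_one hlam.le
      have h1q : 0 ≤ 1 - q := by linarith
      calc (n : ℝ) * (t / 2 * min 1 lam) ≤ ((1 - q) * (2 * (1 - δ) * (k : ℝ) / lam ^ 2 * Real.log M *
              max 1 lam)) * (t / 2 * min 1 lam) := by
            gcongr
            exact hn.trans (by gcongr)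
        _ = (1 - q) * (2 * (1 - δ) * (k : ℝ) / lam ^ 2 * Real.log M) * (t / 2) *
              (max 1 lam * min 1 lam) := by ring
        _ = _ := by rw [hmm, ht]; field_simp
    have hκ0 : 0 < κ := by linarith
    calc (L : ℝ) * (s * (1 + s) * t / 2) + n * (s * κ * t / 2 * min 1 lam)
        = s * (1 + s) * (L * (t / 2)) + s * κ * (n * (t / 2 * min 1 lam)) := by ring
      _ ≤ s * κ * (L * (t / 2)) + s * κ * (n * (t / 2 * min 1 lam)) := by gcongr
      _ ≤ s * κ * (q * ((1 - δ) * Real.log M)) + s * κ * ((1 - q) * ((1 - δ) * Real.log M)) := by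
          gcongr
      _ = s * (κ * (1 - δ)) * Real.log M := by ring
      _ = _ := by rw [hκ]; ring
  have hB0 : 0 ≤ B := by positivity
  obtain ⟨j, hj, hjb⟩ := test_bound hs (S0ᶜ) hne (fun j => insert j S0)
    (by
      intro i hi j hj hij
      have hi : i ∉ S0 := by simpa using hi
      have hij : insert i S0 = insert j S0 := hij
      have : i ∈ insert j S0 := by rw [← hij]; simp
      simpa [hi] using this)
    (fun j => (Measure.pi fun _ : Fin L => labeledLaw (muVec p k lam (insert j S0))).prod
            (Measure.pi fun _ : Fin n => unlabeledLaw (muVec p k lam (insert j S0))))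
    ((Measure.pi fun _ : Fin L => labeledLaw c).prod (Measure.pi fun _ : Fin n => unlabeledLaw c))
    B
    (by
      intro j hj
      have d1 := (labeled_dom s c (e j) (hce j hj)).pi hs.le L
      have d2 := (hdom p c (e j) (hce j hj) (hee j) hcc).pi hs.le n
      have := Dom.prod hs.le d1 d2
      rw [hee j, ← ENNReal.ofReal_pow (Real.exp_pos _).le, ← ENNReal.ofReal_pow (Real.exp_pos _).le,
        ← ENNReal.ofReal_mul (by positivity)] at this
      simp only [hmu j hj]
      exact this)
    hB0 (M ^ (1 - δ / 4)) (by positivity) (fun d => est d.1 d.2)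
  refine ⟨insert j S0, ?_, le_trans ?_ hjb⟩
  · have hj : j ∉ S0 := by simpa using hj
    rw [Finset.mem_powersetCard]
    refine ⟨Finset.subset_univ _, ?_⟩
    rw [Finset.card_insert_of_notMem hj, hS0]; omega
  · rw [hcard]
    have e1 : M ^ (1 - δ / 4) / M = M ^ (-(δ / 4)) := by
      rw [show -(δ / 4) = (1 - δ / 4) - 1 by ring, Real.rpow_sub_one hM0.ne']
    have e2 : (M ^ (1 - δ / 4)) ^ (-s) * B ≤ M ^ (-(s * δ / 4)) := by
      calc (M ^ (1 - δ / 4)) ^ (-s) * B ≤ (M ^ (1 - δ / 4)) ^ (-s) * M ^ (s * (1 - δ / 2)) := by gcongr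
        _ = _ := by
          rw [← Real.rpow_mul hM0.le, ← Real.rpow_add hM0]
          congr 1; ring
    rw [e1]
    linarith

/-- Corollary 1: SSL information lower bound. With
`L₀ < 2(1-δ)(k/λ) log(p-k+1)`, `n₀ < 2(1-δ)(k/λ²) log(p-k+1) max{1,λ}`, `L = ⌊qL₀⌋` labeled
and `n = ⌊(1-q)n₀⌋` unlabeled samples, any sequence of support estimators based on both data
sets has worst-case error probability at least `δ` asymptotically as `p → ∞`. -/
theorem stmt3 (δ lam q : ℝ) (hδ : δ ∈ Set.Ioo (0 : ℝ) 1) (hlam : 0 < lam)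
    (hq : q ∈ Set.Icc (0 : ℝ) 1)
    (p k L₀ n₀ : ℕ → ℕ)
    (hp : Tendsto p atTop atTop) (hk : Tendsto k atTop atTop)
    (hL₀ : Tendsto L₀ atTop atTop) (hn₀ : Tendsto n₀ atTop atTop)
    (hkp : Tendsto (fun t => (k t : ℝ) / (p t : ℝ)) atTop (nhds 0))
    (hL₀bound : ∀ t, (L₀ t : ℝ) <
      2 * (1 - δ) * (k t : ℝ) / lam * Real.log ((p t : ℝ) - (k t : ℝ) + 1))
    (hn₀bound : ∀ t, (n₀ t : ℝ) <
      2 * (1 - δ) * (k t : ℝ) / lam ^ 2 * Real.log ((p t : ℝ) - (k t : ℝ) + 1) * max 1 lam)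
    (est : ∀ t : ℕ,
      (Fin ⌊q * (L₀ t : ℝ)⌋₊ → (Fin (p t) → ℝ) × ℝ) →
      (Fin ⌊(1 - q) * (n₀ t : ℝ)⌋₊ → (Fin (p t) → ℝ)) → Finset (Fin (p t))) :
    δ ≤ liminf (fun t : ℕ =>
      ⨆ S ∈ Finset.univ.powersetCard (k t),
        (((Measure.pi fun _ : Fin ⌊q * (L₀ t : ℝ)⌋₊ => labeledLaw (muVec (p t) (k t) lam S)).prod
            (Measure.pi fun _ : Fin ⌊(1 - q) * (n₀ t : ℝ)⌋₊ =>
              unlabeledLaw (muVec (p t) (k t) lam S)))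
          {d | est t d.1 d.2 ≠ S}).toReal) atTop := by
  have hδ' := hδ
  obtain ⟨hδ0, hδ1⟩ := hδ'
  set κ := (1 - δ / 2) / (1 - δ) with hκd
  have h1δ : 0 < 1 - δ := by linarith
  have hκ1 : 1 < κ := by rw [hκd, lt_div_iff₀ h1δ]; linarith
  have hκe : κ * (1 - δ) = 1 - δ / 2 := by rw [hκd]; field_simp
  obtain ⟨s, hs0, hs1, hsκ, hev⟩ := exists_s κ lam hκ1 hlam
  have hkR : Tendsto (fun t => (k t : ℝ)) atTop atTop := tendsto_natCast_atTop_atTop.comp hk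
  have hpR : Tendsto (fun t => (p t : ℝ)) atTop atTop := tendsto_natCast_atTop_atTop.comp hp
  have htk : Tendsto (fun t => lam / (k t : ℝ)) atTop (nhdsWithin 0 (Set.Ioi 0)) := by
    rw [tendsto_nhdsWithin_iff]
    refine ⟨hkR.const_div_atTop lam, ?_⟩
    filter_upwards [hkR.eventually_gt_atTop 0] with t ht
    exact div_pos hlam ht
  have hhalf : ∀ᶠ t in atTop, (k t : ℝ) ≤ p t / 2 := by
    filter_upwards [hkp.eventually (gt_mem_nhds (by norm_num : (0 : ℝ) < 1 / 2)),
      hpR.eventually_gt_atTop 0] with t h1 h2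
    rw [div_lt_iff₀ h2] at h1
    linarith
  have hM : Tendsto (fun t => (p t : ℝ) - k t + 1) atTop atTop := by
    refine tendsto_atTop_mono' _ ?_ (hpR.atTop_div_const (by norm_num : (0 : ℝ) < 2))
    filter_upwards [hhalf] with t h1
    linarith
  have hlim : Tendsto (fun t => ((p t : ℝ) - k t + 1) ^ (-(δ / 4))
      + ((p t : ℝ) - k t + 1) ^ (-(s * δ / 4))) atTop (nhds 0) := by
    have := ((tendsto_rpow_neg_atTop (by positivity : 0 < δ / 4)).comp hM).add
      ((tendsto_rpow_neg_atTop (by positivity : 0 < s * δ / 4)).comp hM)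
    simpa using this
  refine le_liminf_of_le ?_ ?_
  · refine IsBoundedUnder.isCoboundedUnder_ge ⟨1, ?_⟩
    rw [eventually_map]
    refine Eventually.of_forall fun t => ?_
    refine Real.iSup_le (fun S => Real.iSup_le (fun _ => ?_) zero_le_one) zero_le_one
    exact measureReal_le_one
  · filter_upwards [htk.eventually hev, hhalf, hlim.eventually (gt_mem_nhds h1δ),
      hk.eventually_ge_atTop 1] with t h1 h2 h3 h4
    have hkp' : k t ≤ p t := by
      have : (0 : ℝ) ≤ p t := by positivity
      have : (k t : ℝ) ≤ p t := by linarith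
      exact_mod_cast this
    obtain ⟨S, hS, hb⟩ := inst_bound δ lam q s κ hδ hlam hq hs0 hsκ hκe (p t) (k t) (L₀ t) (n₀ t)
      _ _ (Nat.floor_le (mul_nonneg hq.1 (Nat.cast_nonneg _)))
      (Nat.floor_le (mul_nonneg (by linarith [hq.2]) (Nat.cast_nonneg _))) h4 hkp' (hL₀bound t) (hn₀bound t) h1 (est t)
    refine le_ciSup_of_le (Set.finite_range _).bddAbove S ?_
    rw [ciSup_pos hS]
    linarith
end
end
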